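/- arXiv:2502.18606 — 3 statements merged into one kernel-verified Lean document; each statement's English description precedes it below -/
import Mathlib

section
/- Let d ≥ 1 and let g : ℝ^d → ℝ be a smooth, strictly positive function with Gaussian-type bounds (there exist constants 0 < c ≤ C and β, β' > 0 with c·e^{−β|x|²} ≤ g(x) ≤ C·e^{−β'|x|²}, and every derivative of log g up to order four grows at most polynomially). Then 2∫_{ℝ^d} (∇g/g)·∇(Δg) dx − ∫_{ℝ^d} (|∇g|²/g²)·Δg dx = −2∫_{ℝ^d} g·‖∇² log g‖_F² dx ≤ 0, where ∇² log g is the Hessian matrix of log g and ‖·‖_F the Frobenius norm. (Fisher-information part of the lemma on decay along the heat flow.) -/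
open MeasureTheory Real

noncomputable section

/-- Partial derivative of `g : ℝ^d → ℝ` in the `i`-th coordinate direction. -/
def pd {d : ℕ} (g : (Fin d → ℝ) → ℝ) (x : Fin d → ℝ) (i : Fin d) : ℝ :=
  fderiv ℝ g x (Pi.single i 1)

/-- Laplacian of `g : ℝ^d → ℝ`. -/
def lap {d : ℕ} (g : (Fin d → ℝ) → ℝ) (x : Fin d → ℝ) : ℝ :=
  ∑ i, pd (fun y => pd g y i) x i

/-!
Put `uᵢ = ∂ᵢ log g`, so that `∂ᵢ g = uᵢ g`. For every function `u` the Leibniz rule gives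
`2 u Δ(u g) - u² Δg = Δ(u² g) - 2 g |∇u|²`; taking `u = uᵢ` and summing over `i`, the integrand on
the left-hand side of the theorem becomes `Δ(|∇g|² / g) - 2 g ‖∇² log g‖²`. The bounds on `g` and on
the derivatives of `log g` make `|∇g|² / g` and its derivatives integrable, so that its Laplacian
has integral zero.
-/

section PartialDerivatives

variable {d : ℕ} {u v : (Fin d → ℝ) → ℝ} {x : Fin d → ℝ}

lemma pd_mul (hu : DifferentiableAt ℝ u x) (hv : DifferentiableAt ℝ v x) (i : Fin d) :
    pd (fun y => u y * v y) x i = pd u x i * v x + u x * pd v x i := by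
  simp only [pd, fderiv_fun_mul hu hv, add_apply, FunLike.coe_smul, Pi.smul_apply, smul_eq_mul]
  ring

lemma pd_add (hu : DifferentiableAt ℝ u x) (hv : DifferentiableAt ℝ v x) (i : Fin d) :
    pd (fun y => u y + v y) x i = pd u x i + pd v x i := by
  simp [pd, fderiv_fun_add hu hv]

lemma pd_sum {ι : Type*} (s : Finset ι) {w : ι → (Fin d → ℝ) → ℝ}
    (hw : ∀ j ∈ s, DifferentiableAt ℝ (w j) x) (i : Fin d) :
    pd (fun y => ∑ j ∈ s, w j y) x i = ∑ j ∈ s, pd (w j) x i := by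
  simp [pd, fderiv_fun_sum hw]

lemma pd_eq_pd_log_mul (hu : DifferentiableAt ℝ u x) (hx : u x ≠ 0) (i : Fin d) :
    pd u x i = pd (fun y => log (u y)) x i * u x := by
  simp [pd, fderiv.log hu hx, mul_right_comm, hx]

lemma contDiff_pd {n : WithTop ℕ∞} (hu : ContDiff ℝ (n + 1) u) (i : Fin d) :
    ContDiff ℝ n (pd u · i) :=
  (hu.fderiv_right le_rfl).clm_apply contDiff_const

lemma differentiable_pd (hu : ContDiff ℝ 2 u) (i : Fin d) : Differentiable ℝ (pd u · i) :=
  (contDiff_pd (n := 1) (hu.of_le (by norm_num)) i).differentiable (by simp)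

lemma pd_pd_comm (hu : ContDiff ℝ 2 u) (i j : Fin d) :
    pd (pd u · i) x j = pd (pd u · j) x i := by
  have hdiff : DifferentiableAt ℝ (fderiv ℝ u) x :=
    (hu.fderiv_right (m := 1) (by norm_num)).differentiable (by simp) x
  have pd_pd (a b : Fin d) : pd (pd u · a) x b =
      fderiv ℝ (fderiv ℝ u) x (Pi.single b 1) (Pi.single a 1) := by
    simp [pd, fderiv_clm_apply hdiff (differentiableAt_const _)]
  rw [pd_pd, pd_pd]
  exact hu.contDiffAt.isSymmSndFDerivAt (by simp) _ _

lemma pd_lap (hu : ContDiff ℝ 3 u) (i : Fin d) : pd (lap u) x i = lap (pd u · i) x := by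
  have hu₂ : ContDiff ℝ 2 u := hu.of_le (by norm_num)
  have hpd (j : Fin d) : ContDiff ℝ 2 (pd u · j) := contDiff_pd (hu.of_le (by norm_num)) j
  calc pd (lap u) x i = ∑ j, pd (pd (pd u · j) · j) x i :=
        pd_sum _ (fun j _ => differentiable_pd (hpd j) j x) i
    _ = ∑ j, pd (pd (pd u · j) · i) x j := by simp only [pd_pd_comm (hpd _) _ i]
    _ = lap (pd u · i) x := by simp only [lap, pd_pd_comm hu₂ _ i]

lemma lap_mul (hu : ContDiff ℝ 2 u) (hv : ContDiff ℝ 2 v) :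
    lap (fun y => u y * v y) x =
      lap u x * v x + 2 * ∑ i, pd u x i * pd v x i + u x * lap v x := by
  have du : Differentiable ℝ u := hu.differentiable (by simp)
  have dv : Differentiable ℝ v := hv.differentiable (by simp)
  have hpd (i : Fin d) : pd (pd (fun y => u y * v y) · i) x i =
      pd (pd u · i) x i * v x + 2 * (pd u x i * pd v x i) + u x * pd (pd v · i) x i := by
    have du' := differentiable_pd hu i x
    have dv' := differentiable_pd hv i x
    simp only [pd_mul (du _) (dv _)]
    rw [pd_add (du'.fun_mul (dv x)) ((du x).fun_mul dv'), pd_mul du' (dv x), pd_mul (du x) dv']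
    ring
  simp only [lap, hpd, Finset.sum_add_distrib, Finset.sum_mul, Finset.mul_sum]

lemma two_mul_mul_lap_mul_sub_sq_mul_lap (hu : ContDiff ℝ 2 u) (hv : ContDiff ℝ 2 v) :
    2 * (u x * lap (fun y => u y * v y) x) - u x ^ 2 * lap v x =
      lap (fun y => u y * (u y * v y)) x - 2 * (v x * ∑ i, pd u x i ^ 2) := by
  have hgrad : ∑ i, pd u x i * pd (fun y => u y * v y) x i =
      v x * ∑ i, pd u x i ^ 2 + u x * ∑ i, pd u x i * pd v x i := by
    simp only [pd_mul (hu.differentiable (by simp) x) (hv.differentiable (by simp) x),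
      Finset.mul_sum, ← Finset.sum_add_distrib]
    exact Finset.sum_congr rfl fun i _ => by ring
  rw [lap_mul hu (hu.mul hv), hgrad, lap_mul hu hv]
  ring

end PartialDerivatives

section TemperateGrowth

variable {E F G : Type*} [NormedAddCommGroup E] [NormedSpace ℝ E]
  [NormedAddCommGroup F] [NormedSpace ℝ F] [NormedAddCommGroup G] [NormedSpace ℝ G]

/-- `C^N` functions whose derivatives of order at most `N` are polynomially bounded: the finite
order version of `Function.HasTemperateGrowth`, for the derivatives of `log g`. -/
def HasTemperateGrowthUpTo (N : ℕ) (u : E → F) : Prop :=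
  ContDiff ℝ N u ∧ ∀ k ≤ N, ∃ C : ℝ, ∃ n : ℕ, ∀ x,
    ‖iteratedFDeriv ℝ k u x‖ ≤ C * (1 + ‖x‖) ^ n

namespace HasTemperateGrowthUpTo

variable {M N : ℕ}

lemma mono {u : E → F} (hu : HasTemperateGrowthUpTo N u) (hMN : M ≤ N) :
    HasTemperateGrowthUpTo M u :=
  ⟨hu.1.of_le (by exact_mod_cast hMN), fun k hk => hu.2 k (hk.trans hMN)⟩

protected lemma fderiv {u : E → F} (hu : HasTemperateGrowthUpTo (N + 1) u) :
    HasTemperateGrowthUpTo N (fderiv ℝ u) := by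
  refine ⟨hu.1.fderiv_right (by simp), fun k hk => ?_⟩
  simpa only [norm_iteratedFDeriv_fderiv] using hu.2 (k + 1) (by omega)

lemma clm_apply_const {φ : E → F →L[ℝ] G} (hφ : HasTemperateGrowthUpTo N φ) (v : F) :
    HasTemperateGrowthUpTo N (fun x => φ x v) := by
  refine ⟨hφ.1.clm_apply contDiff_const, fun k hk => ?_⟩
  obtain ⟨C, n, hC⟩ := hφ.2 k hk
  refine ⟨‖v‖ * C, n, fun x => ?_⟩
  calc ‖iteratedFDeriv ℝ k (fun y => φ y v) x‖ ≤ ‖v‖ * ‖iteratedFDeriv ℝ k φ x‖ :=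
        norm_iteratedFDeriv_clm_apply_const hφ.1.contDiffAt (by exact_mod_cast hk)
    _ ≤ ‖v‖ * (C * (1 + ‖x‖) ^ n) := by gcongr; exact hC x
    _ = ‖v‖ * C * (1 + ‖x‖) ^ n := (mul_assoc ..).symm

protected lemma pd {d : ℕ} {u : (Fin d → ℝ) → ℝ} (hu : HasTemperateGrowthUpTo (N + 1) u)
    (i : Fin d) : HasTemperateGrowthUpTo N (pd u · i) :=
  hu.fderiv.clm_apply_const _

end HasTemperateGrowthUpTo

end TemperateGrowth

section FiniteMoments

variable {E F G : Type*} [NormedAddCommGroup E] [NormedSpace ℝ E] [MeasurableSpace E]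
  [NormedAddCommGroup F] [NormedSpace ℝ F] [NormedAddCommGroup G] [NormedSpace ℝ G]
  {μ : Measure E} {M N : ℕ}

/-- `C^N` functions whose derivatives of order at most `N` are integrable against every power of
`1 + ‖x‖`: an `L¹` form of rapid decay, for `g` and its products with the derivatives of
`log g`. -/
def HasFiniteMomentsUpTo (N : ℕ) (w : E → F) (μ : Measure E) : Prop :=
  ContDiff ℝ N w ∧ ∀ k ≤ N, ∀ n : ℕ,
    Integrable (fun x => (1 + ‖x‖) ^ n * ‖iteratedFDeriv ℝ k w x‖) μ

namespace HasFiniteMomentsUpTo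

lemma mono {w : E → F} (hw : HasFiniteMomentsUpTo N w μ) (hMN : M ≤ N) :
    HasFiniteMomentsUpTo M w μ :=
  ⟨hw.1.of_le (by exact_mod_cast hMN), fun k hk => hw.2 k (hk.trans hMN)⟩

lemma zero_iff {w : E → F} : HasFiniteMomentsUpTo 0 w μ ↔
    Continuous w ∧ ∀ n : ℕ, Integrable (fun x => (1 + ‖x‖) ^ n * ‖w x‖) μ := by
  simp [HasFiniteMomentsUpTo]

protected lemma fderiv {w : E → F} (hw : HasFiniteMomentsUpTo (N + 1) w μ) :
    HasFiniteMomentsUpTo N (fderiv ℝ w) μ := by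
  refine ⟨hw.1.fderiv_right (by simp), fun k hk n => ?_⟩
  simpa only [norm_iteratedFDeriv_fderiv] using hw.2 (k + 1) (by omega) n

lemma of_fderiv {w : E → F} (hw : HasFiniteMomentsUpTo 0 w μ) (hdiff : Differentiable ℝ w)
    (hw' : HasFiniteMomentsUpTo N (fderiv ℝ w) μ) : HasFiniteMomentsUpTo (N + 1) w μ := by
  refine ⟨contDiff_succ_iff_fderiv.2 ⟨hdiff, by simp, hw'.1⟩, fun k hk n => ?_⟩
  cases k with
  | zero => exact hw.2 0 le_rfl n
  | succ k => simpa only [norm_iteratedFDeriv_fderiv] using hw'.2 k (by omega) n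

variable [OpensMeasurableSpace E]

lemma integrable [SecondCountableTopologyEither E F] {w : E → F}
    (hw : HasFiniteMomentsUpTo N w μ) : Integrable w μ := by
  have hnorm : Integrable (fun x => ‖w x‖) μ := by
    simpa using (zero_iff.1 (hw.mono N.zero_le)).2 0
  exact (integrable_norm_iff hw.1.continuous.aestronglyMeasurable).1 hnorm

lemma of_le_integrable {w : E → F} (hw : ContDiff ℝ N w)
    (hle : ∀ k ≤ N, ∀ n : ℕ, ∃ B : E → ℝ, Integrable B μ ∧
      ∀ x, (1 + ‖x‖) ^ n * ‖iteratedFDeriv ℝ k w x‖ ≤ B x) : HasFiniteMomentsUpTo N w μ := by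
  refine ⟨hw, fun k hk n => ?_⟩
  obtain ⟨B, hB, hwB⟩ := hle k hk n
  have hcont : Continuous (iteratedFDeriv ℝ k w) :=
    hw.continuous_iteratedFDeriv (by exact_mod_cast hk)
  refine hB.mono' (((continuous_const.add continuous_norm).pow n).mul
    hcont.norm).aestronglyMeasurable (.of_forall fun x => ?_)
  rw [norm_of_nonneg (by positivity)]
  exact hwB x

lemma sum {ι : Type*} (s : Finset ι) {w : ι → E → F}
    (hw : ∀ i ∈ s, HasFiniteMomentsUpTo N (w i) μ) :
    HasFiniteMomentsUpTo N (fun x => ∑ i ∈ s, w i x) μ := by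
  refine .of_le_integrable (.sum fun i hi => (hw i hi).1) fun k hk n =>
    ⟨_, integrable_finsetSum s fun i hi => (hw i hi).2 k hk n, fun x => ?_⟩
  rw [← Finset.mul_sum, iteratedFDeriv_fun_sum_apply fun i hi =>
    ((hw i hi).1.of_le (by exact_mod_cast hk)).contDiffAt]
  gcongr
  exact norm_sum_le _ _

lemma clm_apply_const {φ : E → F →L[ℝ] G} (hφ : HasFiniteMomentsUpTo N φ μ) (v : F) :
    HasFiniteMomentsUpTo N (fun x => φ x v) μ := by
  refine .of_le_integrable (hφ.1.clm_apply contDiff_const) fun k hk n =>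
    ⟨_, (hφ.2 k hk n).const_mul ‖v‖, fun x => ?_⟩
  rw [mul_left_comm]
  gcongr
  exact norm_iteratedFDeriv_clm_apply_const hφ.1.contDiffAt (by exact_mod_cast hk)

lemma smul {w : E → ℝ} {φ : E → F} (hw : HasFiniteMomentsUpTo N w μ)
    (hφ : HasTemperateGrowthUpTo N φ) : HasFiniteMomentsUpTo N (fun x => w x • φ x) μ := by
  refine .of_le_integrable (hw.1.smul hφ.1) fun k hk n => ?_
  choose C m hC using fun i => hφ.2 (k - i) (by omega)
  have hint : Integrable (fun x => ∑ i ∈ Finset.range (k + 1),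
      k.choose i * C i * ((1 + ‖x‖) ^ (n + m i) * ‖iteratedFDeriv ℝ i w x‖)) μ :=
    integrable_finsetSum _ fun i hi =>
      (hw.2 i ((Finset.mem_range_succ_iff.1 hi).trans hk) _).const_mul _
  refine ⟨_, hint, fun x => ?_⟩
  calc (1 + ‖x‖) ^ n * ‖iteratedFDeriv ℝ k (fun y => w y • φ y) x‖
      ≤ (1 + ‖x‖) ^ n * ∑ i ∈ Finset.range (k + 1),
          k.choose i * ‖iteratedFDeriv ℝ i w x‖ * ‖iteratedFDeriv ℝ (k - i) φ x‖ := by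
        gcongr
        exact norm_iteratedFDeriv_smul_le hw.1 hφ.1 x (by exact_mod_cast hk)
    _ ≤ (1 + ‖x‖) ^ n * ∑ i ∈ Finset.range (k + 1),
          k.choose i * ‖iteratedFDeriv ℝ i w x‖ * (C i * (1 + ‖x‖) ^ m i) := by
        gcongr with i
        exact hC i x
    _ = ∑ i ∈ Finset.range (k + 1),
          k.choose i * C i * ((1 + ‖x‖) ^ (n + m i) * ‖iteratedFDeriv ℝ i w x‖) := by
        rw [Finset.mul_sum]
        exact Finset.sum_congr rfl fun i _ => by ring

lemma mul_left {w u : E → ℝ} (hw : HasFiniteMomentsUpTo N w μ)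
    (hu : HasTemperateGrowthUpTo N u) : HasFiniteMomentsUpTo N (fun x => u x * w x) μ := by
  simpa only [smul_eq_mul, mul_comm] using hw.smul hu

lemma of_log {g : E → ℝ} (hg : HasFiniteMomentsUpTo 0 g μ) (hdiff : Differentiable ℝ g)
    (hpos : ∀ x, 0 < g x) (hlog : HasTemperateGrowthUpTo N fun x => log (g x)) :
    HasFiniteMomentsUpTo N g μ := by
  induction N with
  | zero => exact hg
  | succ N ih =>
    have hfderiv : fderiv ℝ g = fun x => g x • fderiv ℝ (fun y => log (g y)) x := by
      ext1 x
      rw [fderiv.log (hdiff x) (hpos x).ne', smul_inv_smul₀ (hpos x).ne']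
    exact hg.of_fderiv hdiff (hfderiv ▸ (ih (hlog.mono N.le_succ)).smul hlog.fderiv)

protected lemma pd {d : ℕ} {μ : Measure (Fin d → ℝ)} {w : (Fin d → ℝ) → ℝ}
    (hw : HasFiniteMomentsUpTo (N + 1) w μ) (i : Fin d) :
    HasFiniteMomentsUpTo N (pd w · i) μ :=
  hw.fderiv.clm_apply_const _

protected lemma lap {d : ℕ} {μ : Measure (Fin d → ℝ)} {w : (Fin d → ℝ) → ℝ}
    (hw : HasFiniteMomentsUpTo (N + 2) w μ) : HasFiniteMomentsUpTo N (lap w) μ :=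
  .sum _ fun i _ => (hw.pd i).pd i

end HasFiniteMomentsUpTo

end FiniteMoments

section Gaussian

variable {d : ℕ}

lemma integrable_exp_neg_mul_sum_sq {b : ℝ} (hb : 0 < b) :
    Integrable (fun x : Fin d → ℝ => exp (-b * ∑ i, x i ^ 2)) := by
  simp only [Finset.mul_sum, exp_sum]
  exact .fintype_prod (μ := fun _ => volume) fun _ => integrable_exp_neg_mul_sq hb

lemma norm_sq_le_sum_sq (x : Fin d → ℝ) : ‖x‖ ^ 2 ≤ ∑ i, x i ^ 2 := by
  have hcoord (i : Fin d) : x i ^ 2 ≤ ∑ i, x i ^ 2 :=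
    Finset.single_le_sum (f := fun i => x i ^ 2) (fun i _ => sq_nonneg _) (Finset.mem_univ i)
  have hnorm : ‖x‖ ≤ √(∑ i, x i ^ 2) :=
    (pi_norm_le_iff_of_nonneg (sqrt_nonneg _)).2 fun i => abs_le_sqrt (hcoord i)
  exact (Real.le_sqrt (norm_nonneg x) (by positivity)).1 hnorm

lemma one_add_pow_le_mul_exp_sq {b r : ℝ} (hb : 0 < b) (hr : 0 ≤ r) (n : ℕ) :
    (1 + r) ^ n ≤ n.factorial * exp (1 + 1 / (4 * b)) * exp (b * r ^ 2) := by
  have hsq : r ≤ 1 / (4 * b) + b * r ^ 2 := by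
    have : 1 / (4 * b) + b * r ^ 2 - r = b * (r - 1 / (2 * b)) ^ 2 := by
      field_simp
      ring
    linarith [show 0 ≤ b * (r - 1 / (2 * b)) ^ 2 by positivity]
  calc (1 + r) ^ n ≤ n.factorial * exp (1 + r) := by
        rw [← div_le_iff₀' (by positivity)]
        exact pow_div_factorial_le_exp _ (by positivity) n
    _ ≤ n.factorial * exp (1 + (1 / (4 * b) + b * r ^ 2)) := by gcongr
    _ = n.factorial * exp (1 + 1 / (4 * b)) * exp (b * r ^ 2) := by
        rw [← add_assoc, exp_add, mul_assoc]

lemma integrable_one_add_norm_pow_mul_of_le_exp_neg {w : (Fin d → ℝ) → ℝ} {C b : ℝ}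
    (hw : AEStronglyMeasurable w) (hb : 0 < b)
    (hle : ∀ x, ‖w x‖ ≤ C * exp (-b * ∑ i, x i ^ 2)) (n : ℕ) :
    Integrable (fun x => (1 + ‖x‖) ^ n * w x) := by
  set A : ℝ := n.factorial * exp (1 + 1 / (4 * (b / 2)))
  refine ((integrable_exp_neg_mul_sum_sq (half_pos hb)).const_mul (A * C)).mono'
    ((Continuous.aestronglyMeasurable (by fun_prop)).mul hw) (.of_forall fun x => ?_)
  have hpow : (1 + ‖x‖) ^ n ≤ A * exp (b / 2 * ∑ i, x i ^ 2) :=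
    (one_add_pow_le_mul_exp_sq (half_pos hb) (norm_nonneg x) n).trans
      (by gcongr; exact norm_sq_le_sum_sq x)
  calc ‖(1 + ‖x‖) ^ n * w x‖ = (1 + ‖x‖) ^ n * ‖w x‖ := by
        rw [norm_mul, norm_of_nonneg (by positivity)]
    _ ≤ A * exp (b / 2 * ∑ i, x i ^ 2) * (C * exp (-b * ∑ i, x i ^ 2)) := by
        gcongr
        exact hle x
    _ = A * C * (exp (b / 2 * ∑ i, x i ^ 2) * exp (-b * ∑ i, x i ^ 2)) := by ring
    _ = A * C * exp (-(b / 2) * ∑ i, x i ^ 2) := by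
        rw [← exp_add]
        ring_nf

end Gaussian

section FisherInformation

lemma integral_fderiv_apply_eq_zero {E F : Type*} [NormedAddCommGroup E] [NormedSpace ℝ E]
    [FiniteDimensional ℝ E] [MeasurableSpace E] [BorelSpace E] [NormedAddCommGroup F]
    [NormedSpace ℝ F] {μ : Measure E} [μ.IsAddHaarMeasure] {w : E → F} {v : E}
    (hdiff : Differentiable ℝ w) (hw : Integrable w μ)
    (hw' : Integrable (fun x => fderiv ℝ w x v) μ) : ∫ x, fderiv ℝ w x v ∂μ = 0 := by
  simpa using integral_smul_fderiv_eq_neg_fderiv_smul_of_integrable (μ := μ)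
    (f := fun _ => (1 : ℝ)) (g := w) (v := v) (by simp) (by simpa using hw') (by simpa using hw)
    (fun _ _ => differentiableAt_const _) (fun x _ => hdiff x)

variable {d : ℕ} {u g : (Fin d → ℝ) → ℝ}

lemma integral_lap_eq_zero (hg : HasFiniteMomentsUpTo 2 g volume) : ∫ x, lap g x = 0 := by
  have hint (i : Fin d) : Integrable fun x => pd (pd g · i) x i := ((hg.pd i).pd i).integrable
  simp only [lap]
  rw [integral_finsetSum _ fun i _ => hint i]
  exact Finset.sum_eq_zero fun i _ => integral_fderiv_apply_eq_zero
    (differentiable_pd hg.1 i) (hg.pd i).integrable (hint i)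

lemma integrable_mul_lap_mul (hu : HasTemperateGrowthUpTo 2 u)
    (hg : HasFiniteMomentsUpTo 2 g volume) :
    Integrable fun x => u x * lap (fun y => u y * g y) x :=
  ((hg.mul_left hu).lap.mul_left (hu.mono zero_le_two)).integrable

lemma integrable_sq_mul_lap (hu : HasTemperateGrowthUpTo 0 u)
    (hg : HasFiniteMomentsUpTo 2 g volume) : Integrable fun x => u x ^ 2 * lap g x := by
  simpa only [sq, mul_assoc] using ((hg.lap.mul_left hu).mul_left hu).integrable

lemma integrable_mul_sum_sq_pd (hu : HasTemperateGrowthUpTo 1 u)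
    (hg : HasFiniteMomentsUpTo 0 g volume) :
    Integrable fun x => g x * ∑ i, pd u x i ^ 2 := by
  have hsum : HasFiniteMomentsUpTo 0 (fun x => ∑ i, pd u x i * (pd u x i * g x)) volume :=
    .sum _ fun i _ => (hg.mul_left (hu.pd i)).mul_left (hu.pd i)
  simpa only [sq, ← mul_assoc, ← Finset.sum_mul, mul_comm (g _)] using hsum.integrable

lemma two_mul_integral_mul_lap_mul_sub_integral_sq_mul_lap (hu : HasTemperateGrowthUpTo 2 u)
    (hg : HasFiniteMomentsUpTo 2 g volume) :
    2 * (∫ x, u x * lap (fun y => u y * g y) x) - ∫ x, u x ^ 2 * lap g x =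
      -2 * ∫ x, g x * ∑ i, pd u x i ^ 2 := by
  have hlap : HasFiniteMomentsUpTo 2 (fun y => u y * (u y * g y)) volume :=
    (hg.mul_left hu).mul_left hu
  have hsq := integrable_mul_sum_sq_pd (hu.mono one_le_two) (hg.mono zero_le_two)
  calc 2 * (∫ x, u x * lap (fun y => u y * g y) x) - ∫ x, u x ^ 2 * lap g x
      = ∫ x, (2 * (u x * lap (fun y => u y * g y) x) - u x ^ 2 * lap g x) := by
        rw [integral_sub ((integrable_mul_lap_mul hu hg).const_mul 2)
          (integrable_sq_mul_lap (hu.mono zero_le_two) hg), integral_const_mul]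
    _ = ∫ x, (lap (fun y => u y * (u y * g y)) x - 2 * (g x * ∑ i, pd u x i ^ 2)) := by
        simp only [two_mul_mul_lap_mul_sub_sq_mul_lap hu.1 hg.1]
    _ = -2 * ∫ x, g x * ∑ i, pd u x i ^ 2 := by
        rw [integral_sub hlap.lap.integrable (hsq.const_mul 2), integral_lap_eq_zero hlap,
          integral_const_mul, zero_sub, neg_mul]

lemma sum_pd_mul_pd_lap_div (hg : ContDiff ℝ 3 g) (hpos : ∀ x, 0 < g x) (x : Fin d → ℝ) :
    (∑ i, pd g x i * pd (lap g) x i) / g x = ∑ i, pd (fun y => log (g y)) x i *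
      lap (fun y => pd (fun z => log (g z)) y i * g y) x := by
  have hpd (y i) := pd_eq_pd_log_mul (hg.differentiable (by simp) y) (hpos y).ne' i
  simp only [Finset.sum_div, pd_lap hg, ← hpd]
  exact Finset.sum_congr rfl fun i _ => by rw [hpd x i]; field_simp [(hpos x).ne']

lemma sum_sq_pd_div_sq_mul_lap {x : Fin d → ℝ} (hg : DifferentiableAt ℝ g x) (hx : g x ≠ 0) :
    ((∑ i, pd g x i ^ 2) / g x ^ 2) * lap g x =
      ∑ i, pd (fun y => log (g y)) x i ^ 2 * lap g x := by
  simp only [pd_eq_pd_log_mul hg hx, mul_pow, ← Finset.sum_mul,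
    mul_div_cancel_right₀ _ (pow_ne_zero 2 hx)]

theorem fisher_decay_along_heat_flow_general (hg : ContDiff ℝ 3 g) (hpos : ∀ x, 0 < g x)
    (hmoments : ∀ n : ℕ, Integrable fun x => (1 + ‖x‖) ^ n * g x)
    (hlog : ∀ k ≤ 3, ∃ C : ℝ, ∃ n : ℕ, ∀ x,
      ‖iteratedFDeriv ℝ k (fun y => log (g y)) x‖ ≤ C * (1 + ‖x‖) ^ n) :
    2 * (∫ x, (∑ i, pd g x i * pd (lap g) x i) / g x)
      - (∫ x, ((∑ i, (pd g x i) ^ 2) / (g x) ^ 2) * lap g x)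
      = -2 * ∫ x, g x * ∑ i, ∑ j, (pd (fun y => pd (fun z => log (g z)) y j) x i) ^ 2 ∧
    2 * (∫ x, (∑ i, pd g x i * pd (lap g) x i) / g x)
      - (∫ x, ((∑ i, (pd g x i) ^ 2) / (g x) ^ 2) * lap g x) ≤ 0 := by
  have hdiff : Differentiable ℝ g := hg.differentiable (by simp)
  have hlog' : HasTemperateGrowthUpTo 3 fun y => log (g y) :=
    ⟨by exact_mod_cast hg.log fun x => (hpos x).ne', hlog⟩
  have hu (i : Fin d) : HasTemperateGrowthUpTo 2 (pd (fun y => log (g y)) · i) := hlog'.pd i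
  have hg₀ : HasFiniteMomentsUpTo 0 g volume :=
    .zero_iff.2 ⟨hg.continuous, by simpa only [norm_of_nonneg (hpos _).le] using hmoments⟩
  have hg₂ : HasFiniteMomentsUpTo 2 g volume := hg₀.of_log hdiff hpos (hlog'.mono (by norm_num))
  refine (and_iff_left_of_imp fun heq => ?_).2 ?_
  · rw [heq]
    exact mul_nonpos_of_nonpos_of_nonneg (by norm_num) <|
      integral_nonneg fun x => mul_nonneg (hpos x).le (by positivity)
  · have hhess (x) : g x * ∑ i, ∑ j, pd (pd (fun y => log (g y)) · j) x i ^ 2 =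
        ∑ j, g x * ∑ i, pd (pd (fun y => log (g y)) · j) x i ^ 2 := by
      rw [Finset.sum_comm, Finset.mul_sum]
    simp only [sum_pd_mul_pd_lap_div hg hpos, sum_sq_pd_div_sq_mul_lap (hdiff _) (hpos _).ne',
      hhess]
    rw [integral_finsetSum _ fun i _ => integrable_mul_lap_mul (hu i) hg₂,
      integral_finsetSum _ fun i _ => integrable_sq_mul_lap ((hu i).mono zero_le_two) hg₂,
      integral_finsetSum _ fun j _ => integrable_mul_sum_sq_pd ((hu j).mono one_le_two) hg₀,
      Finset.mul_sum, Finset.mul_sum, ← Finset.sum_sub_distrib]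
    exact Finset.sum_congr rfl fun i _ =>
      two_mul_integral_mul_lap_mul_sub_integral_sq_mul_lap (hu i) hg₂

end FisherInformation

/-- Fisher-information part of the lemma on decay along the heat flow:
`2∫ (∇g/g)·∇(Δg) − ∫ (|∇g|²/g²)·Δg = −2∫ g‖∇² log g‖_F² ≤ 0`. -/
theorem fisher_decay_along_heat_flow
    {d : ℕ} (hd : 1 ≤ d) (g : (Fin d → ℝ) → ℝ)
    (hsmooth : ContDiff ℝ (⊤ : ℕ∞) g) (hpos : ∀ x, 0 < g x)
    (hGauss : ∃ c C β β' : ℝ, 0 < c ∧ c ≤ C ∧ 0 < β ∧ 0 < β' ∧ ∀ x,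
        c * Real.exp (-β * ∑ i, (x i) ^ 2) ≤ g x ∧
        g x ≤ C * Real.exp (-β' * ∑ i, (x i) ^ 2))
    (hPoly : ∀ k : ℕ, k ≤ 4 → ∃ C : ℝ, ∃ n : ℕ, ∀ x,
        ‖iteratedFDeriv ℝ k (fun y => Real.log (g y)) x‖ ≤ C * (1 + ‖x‖) ^ n) :
    2 * (∫ x, (∑ i, pd g x i * pd (lap g) x i) / g x)
      - (∫ x, ((∑ i, (pd g x i) ^ 2) / (g x) ^ 2) * lap g x)
      = -2 * ∫ x, g x * ∑ i, ∑ j,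
          (pd (fun y => pd (fun z => Real.log (g z)) y j) x i) ^ 2 ∧
    2 * (∫ x, (∑ i, pd g x i * pd (lap g) x i) / g x)
      - (∫ x, ((∑ i, (pd g x i) ^ 2) / (g x) ^ 2) * lap g x) ≤ 0 := by
  obtain ⟨_, C, _, β', -, -, -, hβ', hbounds⟩ := hGauss
  have hmoments := integrable_one_add_norm_pow_mul_of_le_exp_neg
    hsmooth.continuous.aestronglyMeasurable hβ' fun x => by
      simpa only [norm_of_nonneg (hpos x).le] using (hbounds x).2
  exact fisher_decay_along_heat_flow_general (contDiff_infty.1 hsmooth 3) hpos hmoments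
    fun k hk => hPoly k (by omega)
end
end

section
/- Let d₁, d₂ ≥ 1 and let g : ℝ^{d₁} × ℝ^{d₂} → ℝ, written g(x,y), be a smooth, strictly positive function with Gaussian-type bounds (Gaussian upper and lower bounds on ℝ^{d₁+d₂} and polynomial growth of all derivatives of log g up to order four). Then 2∫ (∇_y g/g)·∇_y(Δ_x g) dx dy − ∫ (|∇_y g|²/g²)·Δ_x g dx dy = −2∫ (1/g)·‖∇_x∇_y g − (∇_x g ⊗ ∇_y g)/g‖_F² dx dy ≤ 0, where ∇_x∇_y g is the d₁×d₂ matrix of mixed second partial derivatives, (∇_x g ⊗ ∇_y g)_{αγ} = ∂_{x_α}g · ∂_{y_γ}g, and ‖·‖_F is the Frobenius norm. (The mixed-block term Term_{i≠k} in the proof of Fisher-information decay along the heat flow.) -/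
open MeasureTheory Real

noncomputable section

variable {d₁ d₂ : ℕ}

/-- Partial derivative in the `i`-th coordinate of the first (`x`-) block. -/
def pdx (g : (Fin d₁ → ℝ) × (Fin d₂ → ℝ) → ℝ) (z : (Fin d₁ → ℝ) × (Fin d₂ → ℝ))
    (i : Fin d₁) : ℝ :=
  fderiv ℝ g z (Pi.single i 1, 0)

/-- Partial derivative in the `j`-th coordinate of the second (`y`-) block. -/
def pdy (g : (Fin d₁ → ℝ) × (Fin d₂ → ℝ) → ℝ) (z : (Fin d₁ → ℝ) × (Fin d₂ → ℝ))
    (j : Fin d₂) : ℝ :=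
  fderiv ℝ g z (0, Pi.single j 1)

/-- Laplacian in the first block of variables. -/
def lapx (g : (Fin d₁ → ℝ) × (Fin d₂ → ℝ) → ℝ) (z : (Fin d₁ → ℝ) × (Fin d₂ → ℝ)) : ℝ :=
  ∑ i, pdx (fun w => pdx g w i) z i

/-!
Differentiating the flux `2 ∂ᵥg ∂ᵤ∂ᵥg / g - (∂ᵥg)² ∂ᵤg / g²` in the direction `u` gives, pointwise,
`2 ∂ᵥg ∂ᵥ∂ᵤ²g / g - (∂ᵥg)² ∂ᵤ²g / g² + 2 (∂ᵤ∂ᵥg - ∂ᵤg ∂ᵥg / g)² / g`. The integral of the left side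
vanishes as soon as everything is integrable, and summing over coordinate directions `u` in the
`x`-block and `v` in the `y`-block gives the identity. For integrability, `g = exp (log g)` and the
Faà di Bruno formula turn polynomial growth of the derivatives of `log g` into
`|Dᵏg| ≤ g · polynomial`, so each term is `g` times a function of polynomial growth.
-/

/-- The derivative of `f` in the direction `v` as a function of the base point. The coordinate
derivatives `pdx` and `pdy` are the instances for the standard basis vectors of the two blocks. -/
def dirDeriv {E F : Type*} [NormedAddCommGroup E] [NormedSpace ℝ E] [NormedAddCommGroup F]
    [NormedSpace ℝ F] (v : E) (f : E → F) (z : E) : F :=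
  fderiv ℝ f z v

local notation "∂[" v "]" => dirDeriv v

section DirectionalDerivative

variable {E F : Type*} [NormedAddCommGroup E] [NormedSpace ℝ E] [NormedAddCommGroup F]
  [NormedSpace ℝ F] {f : E → F}

theorem contDiff_dirDeriv {m n : WithTop ℕ∞} (hf : ContDiff ℝ n f) (hmn : m + 1 ≤ n) (v : E) :
    ContDiff ℝ m (∂[v] f) :=
  (hf.fderiv_right hmn).clm_apply contDiff_const

@[fun_prop]
theorem measurable_dirDeriv [MeasurableSpace E] [OpensMeasurableSpace E] [CompleteSpace F]
    [MeasurableSpace F] [BorelSpace F] (v : E) (f : E → F) : Measurable (∂[v] f) :=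
  measurable_fderiv_apply_const ℝ f v

theorem hasLineDerivAt_dirDeriv {z : E} (hf : DifferentiableAt ℝ f z) (v : E) :
    HasLineDerivAt ℝ f (∂[v] f z) z v :=
  hf.hasFDerivAt.hasLineDerivAt v

theorem dirDeriv_sum {ι : Type*} {s : Finset ι} {f : ι → E → F} {z : E}
    (hf : ∀ i ∈ s, DifferentiableAt ℝ (f i) z) (v : E) :
    ∂[v] (fun w => ∑ i ∈ s, f i w) z = ∑ i ∈ s, ∂[v] (f i) z := by
  simp [dirDeriv, fderiv_fun_sum hf]

theorem dirDeriv_comm (hf : ContDiff ℝ 2 f) (u v : E) : ∂[u] (∂[v] f) = ∂[v] (∂[u] f) := by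
  have hdiff : Differentiable ℝ (fderiv ℝ f) :=
    (hf.fderiv_right (m := 1) (by norm_num)).differentiable one_ne_zero
  have dirDeriv_dirDeriv (u v z : E) : ∂[u] (∂[v] f) z = fderiv ℝ (fderiv ℝ f) z u v := by
    change fderiv ℝ (fun w => fderiv ℝ f w v) z u = _
    simp [fderiv_clm_apply (hdiff z) (differentiableAt_const v)]
  funext z
  rw [dirDeriv_dirDeriv, dirDeriv_dirDeriv]
  exact hf.contDiffAt.isSymmSndFDerivAt (by simp) u v

theorem foldr_dirDeriv_eq_iteratedFDeriv :
    ∀ (l : List E) {n : WithTop ℕ∞}, ContDiff ℝ n f → l.length ≤ n →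
      l.foldr dirDeriv f = fun z => iteratedFDeriv ℝ l.length f z l.get
  | [], _, _, _ => by simp
  | v :: l, n, hf, hn => by
    have hlt : (l.length : WithTop ℕ∞) < n := lt_of_lt_of_le (by norm_cast; simp) hn
    funext z
    rw [List.foldr_cons, foldr_dirDeriv_eq_iteratedFDeriv l hf hlt.le]
    exact ((hf.differentiable_iteratedFDeriv hlt z).iteratedFDeriv_succ_apply_left'
      (m := (v :: l).get)).symm

theorem integral_eq_zero_of_hasLineDerivAt [FiniteDimensional ℝ E] [MeasurableSpace E]
    [BorelSpace E] {μ : Measure E} [μ.IsAddHaarMeasure] {f' : E → F} {v : E}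
    (hf : ∀ z, HasLineDerivAt ℝ f (f' z) z v) (hint : Integrable f μ) (hint' : Integrable f' μ) :
    ∫ z, f' z ∂μ = 0 := by
  simpa using integral_bilinear_hasLineDerivAt_right_eq_neg_left_of_integrable (μ := μ)
    (f := fun _ : E => (1 : ℝ)) (f' := fun _ => 0) (B := ContinuousLinearMap.lsmul ℝ ℝ)
    (by simp) (by simpa using hint') (by simpa using hint)
    (fun z _ => hasDerivAt_const _ _) (fun z _ => hf z)

end DirectionalDerivative

section PolynomialGrowth

variable {E F : Type*} [SeminormedAddGroup E] [SeminormedAddCommGroup F]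

/-- `f` grows at most polynomially at infinity. Unlike in `Function.HasTemperateGrowth`, nothing is
asked of the derivatives of `f`. -/
def HasPolyGrowth (f : E → F) : Prop :=
  ∃ (C : ℝ) (n : ℕ), ∀ z, ‖f z‖ ≤ C * (1 + ‖z‖) ^ n

namespace HasPolyGrowth

variable {f k : E → F}

theorem const (c : F) : HasPolyGrowth (fun _ : E => c) :=
  ⟨‖c‖, 0, by simp⟩

theorem mono {G : Type*} [SeminormedAddCommGroup G] {k : E → G} (hf : HasPolyGrowth f)
    (hkf : ∀ z, ‖k z‖ ≤ ‖f z‖) : HasPolyGrowth k :=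
  let ⟨C, n, hC⟩ := hf
  ⟨C, n, fun z => (hkf z).trans (hC z)⟩

theorem norm (hf : HasPolyGrowth f) : HasPolyGrowth (fun z => ‖f z‖) :=
  hf.mono fun _ => by simp

theorem neg (hf : HasPolyGrowth f) : HasPolyGrowth (fun z => -f z) :=
  hf.mono fun _ => by simp

theorem add (hf : HasPolyGrowth f) (hk : HasPolyGrowth k) : HasPolyGrowth (fun z => f z + k z) := by
  obtain ⟨C, n, hC⟩ := hf
  obtain ⟨D, m, hD⟩ := hk
  refine ⟨|C| + |D|, n + m, fun z => ?_⟩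
  have one_le : 1 ≤ 1 + ‖z‖ := by simp
  calc ‖f z + k z‖ ≤ C * (1 + ‖z‖) ^ n + D * (1 + ‖z‖) ^ m :=
        norm_add_le_of_le (hC z) (hD z)
    _ ≤ |C| * (1 + ‖z‖) ^ (n + m) + |D| * (1 + ‖z‖) ^ (n + m) := by
        gcongr <;> first | exact le_abs_self _ | exact one_le | omega
    _ = (|C| + |D|) * (1 + ‖z‖) ^ (n + m) := by ring

theorem sub (hf : HasPolyGrowth f) (hk : HasPolyGrowth k) : HasPolyGrowth (fun z => f z - k z) := by
  simpa only [sub_eq_add_neg] using hf.add hk.neg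

theorem sum {ι : Type*} {s : Finset ι} {f : ι → E → F} (hf : ∀ i ∈ s, HasPolyGrowth (f i)) :
    HasPolyGrowth (fun z => ∑ i ∈ s, f i z) := by
  simpa only [← Finset.sum_apply] using
    Finset.sum_induction f HasPolyGrowth (fun _ _ => add) (const 0) hf

theorem mul {R : Type*} [SeminormedRing R] {f k : E → R} (hf : HasPolyGrowth f)
    (hk : HasPolyGrowth k) : HasPolyGrowth (fun z => f z * k z) := by
  obtain ⟨C, n, hC⟩ := hf
  obtain ⟨D, m, hD⟩ := hk
  refine ⟨C * D, n + m, fun z => ?_⟩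
  calc ‖f z * k z‖ ≤ (C * (1 + ‖z‖) ^ n) * (D * (1 + ‖z‖) ^ m) :=
        norm_mul_le_of_le (hC z) (hD z)
    _ = C * D * (1 + ‖z‖) ^ (n + m) := by ring

theorem pow {R : Type*} [SeminormedRing R] {f : E → R} (hf : HasPolyGrowth f) :
    ∀ m : ℕ, HasPolyGrowth (fun z => f z ^ m)
  | 0 => by simpa using const (1 : R)
  | m + 1 => by simpa only [pow_succ] using (hf.pow m).mul hf

theorem integrable_mul {E : Type*} [NormedAddCommGroup E] [MeasurableSpace E] {μ : Measure E}
    {f g : E → ℝ} (hf : HasPolyGrowth f) (hfm : AEStronglyMeasurable f μ)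
    (hg : ∀ n : ℕ, Integrable (fun z => ‖z‖ ^ n * g z) μ) :
    Integrable (fun z => f z * g z) μ := by
  obtain ⟨C, n, hC⟩ := hf
  have hg₀ : Integrable g μ := by simpa using hg 0
  refine ((hg₀.norm.add (hg n).norm).const_mul (|C| * 2 ^ (n - 1))).mono'
    (hfm.mul hg₀.aestronglyMeasurable) (.of_forall fun z => ?_)
  calc ‖f z * g z‖ ≤ |C| * (1 + ‖z‖) ^ n * ‖g z‖ := by
        rw [norm_mul]
        gcongr
        exact (hC z).trans (by gcongr; exact le_abs_self C)
    _ ≤ |C| * (2 ^ (n - 1) * (1 ^ n + ‖z‖ ^ n)) * ‖g z‖ := by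
        gcongr
        exact add_pow_le zero_le_one (norm_nonneg z) n
    _ = |C| * 2 ^ (n - 1) * (‖g z‖ + ‖‖z‖ ^ n * g z‖) := by
        simp only [one_pow, norm_mul, norm_pow, norm_norm]
        ring

end HasPolyGrowth

theorem integrable_of_hasPolyGrowth_div {E : Type*} [NormedAddCommGroup E] [MeasurableSpace E]
    {μ : Measure E} {f g : E → ℝ} (hg : ∀ z, g z ≠ 0)
    (hmom : ∀ n : ℕ, Integrable (fun z => ‖z‖ ^ n * g z) μ) (hfm : Measurable f)
    (hfg : HasPolyGrowth fun z => f z / g z) : Integrable f μ := by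
  have hgm : AEStronglyMeasurable g μ := by simpa using (hmom 0).aestronglyMeasurable
  simpa only [div_mul_cancel₀ _ (hg _)] using
    hfg.integrable_mul (hfm.aestronglyMeasurable.div₀ hgm) hmom

end PolynomialGrowth

section GaussianDecay

theorem pow_mul_exp_neg_mul_sq_le {b t : ℝ} (hb : 0 < b) (ht : 0 ≤ t) (n : ℕ) :
    t ^ n * exp (-b * t ^ 2) ≤ n.factorial * exp (1 / (4 * b)) := by
  have pow_le : t ^ n ≤ n.factorial * exp t := by
    rw [mul_comm, ← div_le_iff₀ (by positivity)]
    exact pow_div_factorial_le_exp t ht n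
  have complete_square : t + -b * t ^ 2 ≤ 1 / (4 * b) := by
    rw [le_div_iff₀ (by positivity)]
    nlinarith [sq_nonneg (2 * b * t - 1)]
  calc t ^ n * exp (-b * t ^ 2) ≤ n.factorial * exp t * exp (-b * t ^ 2) := by gcongr
    _ = n.factorial * exp (t + -b * t ^ 2) := by rw [mul_assoc, exp_add]
    _ ≤ n.factorial * exp (1 / (4 * b)) := by gcongr

theorem integrable_norm_pow_mul_of_norm_le_gaussian {E : Type*} [NormedAddCommGroup E]
    [MeasurableSpace E] [BorelSpace E] [SecondCountableTopology E] {μ : Measure E}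
    [μ.HasTemperateGrowth] {g : E → ℝ} {b C : ℝ}
    (hg : AEStronglyMeasurable g μ) (hb : 0 < b) (hgb : ∀ z, ‖g z‖ ≤ C * exp (-b * ‖z‖ ^ 2))
    (n : ℕ) : Integrable (fun z => ‖z‖ ^ n * g z) μ := by
  have hC : 0 ≤ C := by simpa using (norm_nonneg _).trans (hgb 0)
  have decay (m : ℕ) (z : E) : ‖z‖ ^ m * ‖g z‖ ≤ C * (m.factorial * exp (1 / (4 * b))) :=
    calc ‖z‖ ^ m * ‖g z‖ ≤ ‖z‖ ^ m * (C * exp (-b * ‖z‖ ^ 2)) := by gcongr; exact hgb z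
      _ = C * (‖z‖ ^ m * exp (-b * ‖z‖ ^ 2)) := by ring
      _ ≤ C * (m.factorial * exp (1 / (4 * b))) := by
        exact mul_le_mul_of_nonneg_left (pow_mul_exp_neg_mul_sq_le hb (norm_nonneg z) m) hC
  refine (integrable_of_le_of_pow_mul_le (fun z => by simpa using decay 0 z)
    (decay (n + μ.integrablePower)) hg).mono' ?_ (.of_forall fun z => by simp)
  exact (by fun_prop : Measurable fun z : E => ‖z‖ ^ n).aestronglyMeasurable.mul hg

theorem sq_norm_le_sum_sq {ι : Type*} [Fintype ι] (x : ι → ℝ) : ‖x‖ ^ 2 ≤ ∑ i, x i ^ 2 := by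
  refine (le_sqrt (norm_nonneg _) (by positivity)).1 ((pi_norm_le_iff_of_nonneg (by positivity)).2
    fun i => abs_le_sqrt ?_)
  exact Finset.single_le_sum (f := fun i => x i ^ 2) (by simp [sq_nonneg]) (Finset.mem_univ i)

theorem sq_norm_prod_le_sum_sq {ι κ : Type*} [Fintype ι] [Fintype κ] (z : (ι → ℝ) × (κ → ℝ)) :
    ‖z‖ ^ 2 ≤ (∑ i, z.1 i ^ 2) + ∑ j, z.2 j ^ 2 := by
  have h₁ : 0 ≤ ∑ i, z.1 i ^ 2 := by positivity
  have h₂ : 0 ≤ ∑ j, z.2 j ^ 2 := by positivity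
  rcases le_total ‖z.1‖ ‖z.2‖ with h | h
  · rw [Prod.norm_def, max_eq_right h]
    linarith [sq_norm_le_sum_sq z.2]
  · rw [Prod.norm_def, max_eq_left h]
    linarith [sq_norm_le_sum_sq z.1]

theorem integrable_norm_pow_mul_of_norm_le_gaussian_prod {ι κ : Type*} [Fintype ι] [Fintype κ]
    {μ : Measure ((ι → ℝ) × (κ → ℝ))} [μ.HasTemperateGrowth] {g : (ι → ℝ) × (κ → ℝ) → ℝ} {b C : ℝ}
    (hg : AEStronglyMeasurable g μ) (hb : 0 < b)
    (hgb : ∀ z, ‖g z‖ ≤ C * exp (-b * ((∑ i, z.1 i ^ 2) + ∑ j, z.2 j ^ 2))) (n : ℕ) :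
    Integrable (fun z => ‖z‖ ^ n * g z) μ := by
  have hC : 0 ≤ C := by simpa using (norm_nonneg _).trans (hgb 0)
  refine integrable_norm_pow_mul_of_norm_le_gaussian (C := C) hg hb (fun z => (hgb z).trans ?_) n
  gcongr C * exp ?_
  nlinarith [sq_norm_prod_le_sum_sq z]

end GaussianDecay

section RelativeGrowth

variable {E : Type*} [NormedAddCommGroup E] [NormedSpace ℝ E] {g : E → ℝ} {n : ℕ}

theorem norm_iteratedFDeriv_exp_le {h : E → ℝ} (hh : ContDiff ℝ n h) (z : E) :
    ‖iteratedFDeriv ℝ n (fun w => exp (h w)) z‖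
      ≤ n.factorial * exp (h z) * (1 + ∑ k ∈ Finset.Icc 1 n, ‖iteratedFDeriv ℝ k h z‖) ^ n := by
  refine norm_iteratedFDeriv_comp_le contDiff_exp hh le_rfl z (fun _ _ => ?_) fun k hk₁ hkn => ?_
  · simp [norm_iteratedFDeriv_eq_norm_iteratedDeriv, iteratedDeriv_eq_iterate, iter_deriv_exp]
  · have hsum : ‖iteratedFDeriv ℝ k h z‖ ≤ ∑ j ∈ Finset.Icc 1 n, ‖iteratedFDeriv ℝ j h z‖ :=
      Finset.single_le_sum (f := fun j => ‖iteratedFDeriv ℝ j h z‖) (fun _ _ => norm_nonneg _)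
        (Finset.mem_Icc.2 ⟨hk₁, hkn⟩)
    calc ‖iteratedFDeriv ℝ k h z‖ ≤ 1 + ∑ j ∈ Finset.Icc 1 n, ‖iteratedFDeriv ℝ j h z‖ := by
          linarith
      _ ≤ (1 + ∑ j ∈ Finset.Icc 1 n, ‖iteratedFDeriv ℝ j h z‖) ^ k :=
          le_self_pow₀ (le_add_of_nonneg_right (by positivity)) (by omega)

theorem hasPolyGrowth_inv_smul_iteratedFDeriv (hg : ContDiff ℝ n g) (hpos : ∀ z, 0 < g z)
    (hlog : ∀ k, 1 ≤ k → k ≤ n → HasPolyGrowth (iteratedFDeriv ℝ k fun w => log (g w))) :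
    HasPolyGrowth fun z => (g z)⁻¹ • iteratedFDeriv ℝ n g z := by
  have hbound : HasPolyGrowth fun z => (n.factorial : ℝ) *
      (1 + ∑ k ∈ Finset.Icc 1 n, ‖iteratedFDeriv ℝ k (fun w => log (g w)) z‖) ^ n := by
    refine (HasPolyGrowth.const _).mul (((HasPolyGrowth.const 1).add (.sum fun k hk => ?_)).pow n)
    exact (hlog k (Finset.mem_Icc.1 hk).1 (Finset.mem_Icc.1 hk).2).norm
  refine hbound.mono fun z => ?_
  have hexp := norm_iteratedFDeriv_exp_le (hg.log fun z => (hpos z).ne') z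
  simp only [exp_log (hpos _)] at hexp
  rw [norm_smul, norm_inv, norm_of_nonneg (hpos z).le, inv_mul_le_iff₀ (hpos z)]
  calc ‖iteratedFDeriv ℝ n g z‖
      ≤ g z * (n.factorial *
        (1 + ∑ k ∈ Finset.Icc 1 n, ‖iteratedFDeriv ℝ k (fun w => log (g w)) z‖) ^ n) := by
        linarith
    _ ≤ _ := mul_le_mul_of_nonneg_left (le_norm_self _) (hpos z).le

/-- The derivatives of `g` of order at most `n` are bounded by `g` times a polynomial. -/
def HasRelPolyGrowth (n : ℕ) (g : E → ℝ) : Prop :=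
  ∀ k ≤ n, HasPolyGrowth fun z => (g z)⁻¹ • iteratedFDeriv ℝ k g z

theorem hasRelPolyGrowth_of_log (hg : ContDiff ℝ n g) (hpos : ∀ z, 0 < g z)
    (hlog : ∀ k, 1 ≤ k → k ≤ n → HasPolyGrowth (iteratedFDeriv ℝ k fun w => log (g w))) :
    HasRelPolyGrowth n g := fun _ hk =>
  hasPolyGrowth_inv_smul_iteratedFDeriv (hg.of_le (mod_cast hk)) hpos fun j h₁ hj =>
    hlog j h₁ (hj.trans hk)

theorem HasRelPolyGrowth.foldr_dirDeriv (hrel : HasRelPolyGrowth n g) (hg : ContDiff ℝ n g)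
    (l : List E) (hl : l.length ≤ n) : HasPolyGrowth fun z => l.foldr dirDeriv g z / g z := by
  refine ((hrel l.length hl).norm.mul (.const (∏ i, ‖l.get i‖))).mono fun z => ?_
  rw [foldr_dirDeriv_eq_iteratedFDeriv l hg (mod_cast hl), norm_div, norm_mul, norm_norm,
    norm_smul, norm_inv, div_eq_inv_mul, mul_assoc]
  gcongr
  exact ((iteratedFDeriv ℝ l.length g z).le_opNorm l.get).trans (by gcongr; exact le_norm_self _)

end RelativeGrowth

section MixedBlock

variable {E : Type*} [NormedAddCommGroup E] [NormedSpace ℝ E] {g : E → ℝ}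

/-- The `(u, v)`-entry of the integrand `(∇_y g / g) · ∇_y (Δ_x g)`. -/
def mixedTransport (g : E → ℝ) (u v z : E) : ℝ :=
  ∂[v] g z * ∂[v] (∂[u] (∂[u] g)) z / g z

/-- The `(u, v)`-entry of the integrand `(|∇_y g|² / g²) Δ_x g`. -/
def mixedWeight (g : E → ℝ) (u v z : E) : ℝ :=
  ∂[v] g z ^ 2 / g z ^ 2 * ∂[u] (∂[u] g) z

/-- The `(u, v)`-entry of the dissipation `(1 / g) ‖∇_x ∇_y g - (∇_x g ⊗ ∇_y g) / g‖²`; it equals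
`g (∂[u] ∂[v] log g)²`. -/
def mixedDissipation (g : E → ℝ) (u v z : E) : ℝ :=
  1 / g z * (∂[u] (∂[v] g) z - ∂[u] g z * ∂[v] g z / g z) ^ 2

/-- The quantity whose derivative in the direction `u` relates the other three mixed densities. -/
def mixedFlux (g : E → ℝ) (u v z : E) : ℝ :=
  2 * (∂[v] g z * ∂[u] (∂[v] g) z / g z) - ∂[v] g z ^ 2 * ∂[u] g z / g z ^ 2

theorem hasLineDerivAt_mixedFlux (hg : ContDiff ℝ 3 g) {z : E} (hz : g z ≠ 0) (u v : E) :
    HasLineDerivAt ℝ (mixedFlux g u v)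
      (2 * mixedTransport g u v z - mixedWeight g u v z + 2 * mixedDissipation g u v z) z u := by
  have hg₁ (w : E) : ContDiff ℝ 2 (∂[w] g) := contDiff_dirDeriv hg (by norm_num) w
  have hg₂ : ContDiff ℝ 1 (∂[u] (∂[v] g)) := contDiff_dirDeriv (hg₁ v) (by norm_num) u
  have comm : ∂[u] (∂[u] (∂[v] g)) z = ∂[v] (∂[u] (∂[u] g)) z := by
    rw [dirDeriv_comm (hg.of_le (by norm_num)) u v, dirDeriv_comm (hg₁ u) u v]
  have d₀ := hasLineDerivAt_dirDeriv (hg.differentiable (by norm_num) z) u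
  have d₁ (w : E) := hasLineDerivAt_dirDeriv ((hg₁ w).differentiable (by norm_num) z) u
  have d₂ := hasLineDerivAt_dirDeriv (hg₂.differentiable (by norm_num) z) u
  have hz' : g (z + (0 : ℝ) • u) ≠ 0 := by simpa using hz
  unfold HasLineDerivAt at *
  refine (((((d₁ v).mul d₂).div d₀ hz').const_mul 2).sub
    ((((d₁ v).pow 2).mul (d₁ u)).div (d₀.pow 2) (pow_ne_zero 2 hz'))).congr_deriv ?_
  simp only [zero_smul, add_zero, comm, mixedTransport, mixedWeight, mixedDissipation, Pi.mul_apply,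
    Pi.pow_apply]
  field_simp
  ring

section Integrable

variable [MeasurableSpace E] [BorelSpace E] {μ : Measure E}

variable (hg : ContDiff ℝ 3 g) (hpos : ∀ z, 0 < g z) (hrel : HasRelPolyGrowth 3 g)
  (hmom : ∀ n : ℕ, Integrable (fun z => ‖z‖ ^ n * g z) μ)

include hg hpos hrel hmom

theorem integrable_mixedTransport (u v : E) : Integrable (mixedTransport g u v) μ := by
  have hgm := hg.continuous.measurable
  refine integrable_of_hasPolyGrowth_div (fun z => (hpos z).ne') hmom
    (by unfold mixedTransport; fun_prop) ?_
  convert (hrel.foldr_dirDeriv hg [v] (by simp)).mul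
    (hrel.foldr_dirDeriv hg [v, u, u] (by simp)) using 2 with z
  simp only [mixedTransport, List.foldr]
  field_simp [(hpos z).ne']

theorem integrable_mixedWeight (u v : E) : Integrable (mixedWeight g u v) μ := by
  have hgm := hg.continuous.measurable
  refine integrable_of_hasPolyGrowth_div (fun z => (hpos z).ne') hmom
    (by unfold mixedWeight; fun_prop) ?_
  convert ((hrel.foldr_dirDeriv hg [v] (by simp)).pow 2).mul
    (hrel.foldr_dirDeriv hg [u, u] (by simp)) using 2 with z
  simp only [mixedWeight, List.foldr]
  field_simp [(hpos z).ne']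

theorem integrable_mixedDissipation (u v : E) : Integrable (mixedDissipation g u v) μ := by
  have hgm := hg.continuous.measurable
  refine integrable_of_hasPolyGrowth_div (fun z => (hpos z).ne') hmom
    (by unfold mixedDissipation; fun_prop) ?_
  convert ((hrel.foldr_dirDeriv hg [u, v] (by simp)).sub
    ((hrel.foldr_dirDeriv hg [u] (by simp)).mul
      (hrel.foldr_dirDeriv hg [v] (by simp)))).pow 2 using 2 with z
  simp only [mixedDissipation, List.foldr]
  field_simp [(hpos z).ne']

theorem integrable_mixedFlux (u v : E) : Integrable (mixedFlux g u v) μ := by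
  have hgm := hg.continuous.measurable
  refine integrable_of_hasPolyGrowth_div (fun z => (hpos z).ne') hmom
    (by unfold mixedFlux; fun_prop) ?_
  have hv := hrel.foldr_dirDeriv hg [v] (by simp)
  convert ((HasPolyGrowth.const 2).mul (hv.mul (hrel.foldr_dirDeriv hg [u, v] (by simp)))).sub
    ((hv.pow 2).mul (hrel.foldr_dirDeriv hg [u] (by simp))) using 2 with z
  simp only [mixedFlux, List.foldr]
  field_simp [(hpos z).ne']

theorem integral_mixedTransport_sub_integral_mixedWeight [FiniteDimensional ℝ E]
    [μ.IsAddHaarMeasure] (u v : E) :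
    2 * (∫ z, mixedTransport g u v z ∂μ) - ∫ z, mixedWeight g u v z ∂μ
      = -2 * ∫ z, mixedDissipation g u v z ∂μ := by
  have hT : Integrable (fun z => 2 * mixedTransport g u v z) μ :=
    (integrable_mixedTransport hg hpos hrel hmom u v).const_mul 2
  have hW := integrable_mixedWeight hg hpos hrel hmom u v
  have hTW : Integrable (fun z => 2 * mixedTransport g u v z - mixedWeight g u v z) μ := hT.sub hW
  have hD : Integrable (fun z => 2 * mixedDissipation g u v z) μ :=
    (integrable_mixedDissipation hg hpos hrel hmom u v).const_mul 2
  have flux_zero := integral_eq_zero_of_hasLineDerivAt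
    (fun z => hasLineDerivAt_mixedFlux hg (hpos z).ne' u v)
    (integrable_mixedFlux hg hpos hrel hmom u v) (hTW.add hD)
  rw [integral_add hTW hD, integral_sub hT hW, integral_const_mul, integral_const_mul]
    at flux_zero
  linarith

end Integrable

/-- The sum of the second derivatives of `g` in the directions `u i`; it is `lapx` when `u` is the
standard basis of the `x`-block. -/
def dirLaplacian {ι : Type*} [Fintype ι] (u : ι → E) (g : E → ℝ) (z : E) : ℝ :=
  ∑ i, ∂[u i] (∂[u i] g) z

section Sums

variable {ι κ : Type*} [Fintype ι] [Fintype κ] (u : ι → E) (v : κ → E)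

theorem sum_dirDeriv_mul_dirDeriv_dirLaplacian_div (hg : ContDiff ℝ 3 g) (z : E) :
    (∑ j, ∂[v j] g z * ∂[v j] (dirLaplacian u g) z) / g z
      = ∑ p : ι × κ, mixedTransport g (u p.1) (v p.2) z := by
  have hdiff (w : E) : Differentiable ℝ (∂[w] (∂[w] g)) :=
    (contDiff_dirDeriv (m := 1) (contDiff_dirDeriv (m := 2) hg (by norm_num) w) (by norm_num)
      w).differentiable one_ne_zero
  have dirDeriv_dirLaplacian (w : E) :
      ∂[w] (dirLaplacian u g) z = ∑ i, ∂[w] (∂[u i] (∂[u i] g)) z :=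
    dirDeriv_sum (fun i _ => hdiff (u i) z) w
  simp only [dirDeriv_dirLaplacian, Finset.mul_sum, Finset.sum_div, Fintype.sum_prod_type_right,
    mixedTransport]

theorem sum_sq_dirDeriv_div_mul_dirLaplacian (g : E → ℝ) (z : E) :
    (∑ j, ∂[v j] g z ^ 2) / g z ^ 2 * dirLaplacian u g z
      = ∑ p : ι × κ, mixedWeight g (u p.1) (v p.2) z := by
  simp only [dirLaplacian, Finset.sum_div, Finset.sum_mul_sum, Fintype.sum_prod_type_right,
    mixedWeight]

theorem div_mul_sum_sq_eq_sum_mixedDissipation (g : E → ℝ) (z : E) :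
    1 / g z * ∑ i, ∑ j, (∂[u i] (∂[v j] g) z - ∂[u i] g z * ∂[v j] g z / g z) ^ 2
      = ∑ p : ι × κ, mixedDissipation g (u p.1) (v p.2) z := by
  simp only [Finset.mul_sum, Fintype.sum_prod_type, mixedDissipation]

end Sums

end MixedBlock

theorem fisher_mixed_block_heat_flow_general {E ι κ : Type*} [NormedAddCommGroup E]
    [NormedSpace ℝ E] [FiniteDimensional ℝ E] [MeasurableSpace E] [BorelSpace E] [Fintype ι]
    [Fintype κ] {μ : Measure E} [μ.IsAddHaarMeasure] {g : E → ℝ} (u : ι → E) (v : κ → E)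
    (hg : ContDiff ℝ 3 g) (hpos : ∀ z, 0 < g z)
    (hmom : ∀ n : ℕ, Integrable (fun z => ‖z‖ ^ n * g z) μ)
    (hlog : ∀ k, 1 ≤ k → k ≤ 3 → HasPolyGrowth (iteratedFDeriv ℝ k fun w => log (g w))) :
    2 * (∫ z, (∑ j, ∂[v j] g z * ∂[v j] (dirLaplacian u g) z) / g z ∂μ)
      - (∫ z, (∑ j, ∂[v j] g z ^ 2) / g z ^ 2 * dirLaplacian u g z ∂μ)
      = -2 * ∫ z, 1 / g z *
          ∑ i, ∑ j, (∂[u i] (∂[v j] g) z - ∂[u i] g z * ∂[v j] g z / g z) ^ 2 ∂μ ∧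
    2 * (∫ z, (∑ j, ∂[v j] g z * ∂[v j] (dirLaplacian u g) z) / g z ∂μ)
      - (∫ z, (∑ j, ∂[v j] g z ^ 2) / g z ^ 2 * dirLaplacian u g z ∂μ) ≤ 0 := by
  have hrel : HasRelPolyGrowth 3 g := hasRelPolyGrowth_of_log hg hpos hlog
  have dissipation_nonneg : 0 ≤ ∫ z, 1 / g z *
      ∑ i, ∑ j, (∂[u i] (∂[v j] g) z - ∂[u i] g z * ∂[v j] g z / g z) ^ 2 ∂μ :=
    integral_nonneg fun z => mul_nonneg (one_div_nonneg.2 (hpos z).le) (by positivity)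
  refine (and_iff_left_of_imp fun identity => identity.trans_le (by linarith)).2 ?_
  simp only [sum_dirDeriv_mul_dirDeriv_dirLaplacian_div u v hg,
    sum_sq_dirDeriv_div_mul_dirLaplacian u v, div_mul_sum_sq_eq_sum_mixedDissipation u v]
  rw [integral_finsetSum _ fun p _ => integrable_mixedTransport hg hpos hrel hmom _ _,
    integral_finsetSum _ fun p _ => integrable_mixedWeight hg hpos hrel hmom _ _,
    integral_finsetSum _ fun p _ => integrable_mixedDissipation hg hpos hrel hmom _ _]
  simp only [Finset.mul_sum, ← Finset.sum_sub_distrib,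
    integral_mixedTransport_sub_integral_mixedWeight hg hpos hrel hmom]

/-- The mixed-block term in the proof of Fisher-information decay along the heat flow:
`2∫ (∇_y g/g)·∇_y(Δ_x g) − ∫ (|∇_y g|²/g²)Δ_x g
  = −2∫ (1/g)‖∇_x∇_y g − (∇_x g ⊗ ∇_y g)/g‖_F² ≤ 0`. -/
theorem fisher_mixed_block_heat_flow
    {d₁ d₂ : ℕ} (hd₁ : 1 ≤ d₁) (hd₂ : 1 ≤ d₂)
    (g : (Fin d₁ → ℝ) × (Fin d₂ → ℝ) → ℝ)
    (hsmooth : ContDiff ℝ (⊤ : ℕ∞) g) (hpos : ∀ z, 0 < g z)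
    (hGauss : ∃ c C β β' : ℝ, 0 < c ∧ c ≤ C ∧ 0 < β ∧ 0 < β' ∧ ∀ z,
        c * Real.exp (-β * ((∑ i, (z.1 i) ^ 2) + ∑ j, (z.2 j) ^ 2)) ≤ g z ∧
        g z ≤ C * Real.exp (-β' * ((∑ i, (z.1 i) ^ 2) + ∑ j, (z.2 j) ^ 2)))
    (hPoly : ∀ k : ℕ, k ≤ 4 → ∃ C : ℝ, ∃ n : ℕ, ∀ z,
        ‖iteratedFDeriv ℝ k (fun w => Real.log (g w)) z‖ ≤ C * (1 + ‖z‖) ^ n) :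
    2 * (∫ z, (∑ γ, pdy g z γ * pdy (lapx g) z γ) / g z)
      - (∫ z, ((∑ γ, (pdy g z γ) ^ 2) / (g z) ^ 2) * lapx g z)
      = -2 * ∫ z, (1 / g z) *
          ∑ α, ∑ γ, (pdx (fun w => pdy g w γ) z α - pdx g z α * pdy g z γ / g z) ^ 2 ∧
    2 * (∫ z, (∑ γ, pdy g z γ * pdy (lapx g) z γ) / g z)
      - (∫ z, ((∑ γ, (pdy g z γ) ^ 2) / (g z) ^ 2) * lapx g z) ≤ 0 := by
  obtain ⟨_, _, _, _, -, -, -, hb, hbound⟩ := hGauss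
  have : (volume : Measure ((Fin d₁ → ℝ) × (Fin d₂ → ℝ))).IsAddHaarMeasure :=
    Measure.prod.instIsAddHaarMeasure _ _
  exact fisher_mixed_block_heat_flow_general (fun i => (Pi.single i 1, 0))
    (fun j => (0, Pi.single j 1)) (hsmooth.of_le (by norm_cast)) hpos
    (integrable_norm_pow_mul_of_norm_le_gaussian_prod hsmooth.continuous.aestronglyMeasurable hb
      fun z => (norm_of_nonneg (hpos z).le).trans_le (hbound z).2)
    fun k _ hk => hPoly k (by omega)
end
end

section
/- Let N ≥ 1, 1 ≤ m ≤ N, and let g_N be a symmetric (exchangeable) probability density on ℝ^{3N} with finite Fisher information ∫_{ℝ^{3N}} |∇g_N|²/g_N < ∞. Let g_{N,m}(v¹,…,v^m) = ∫_{ℝ^{3(N−m)}} g_N dv^{m+1}…dv^N be its m-particle marginal. Then the renormalised Fisher information is sub-additive: (1/m)∫_{ℝ^{3m}} |∇g_{N,m}|²/g_{N,m} dV_m ≤ (1/N)∫_{ℝ^{3N}} |∇g_N|²/g_N dV_N. -/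
open MeasureTheory Real

noncomputable section

abbrev V3 := Fin 3 → ℝ
abbrev Conf (N : ℕ) := Fin N → V3

/-- Partial derivative of `g : (ℝ³)^N → ℝ` in block `i`, coordinate `α`. -/
def pdN {N : ℕ} (g : Conf N → ℝ) (x : Conf N) (i : Fin N) (α : Fin 3) : ℝ :=
  fderiv ℝ g x (Pi.single i (Pi.single α 1))

/-- Glue a configuration of the first `m` particles with a configuration of the
remaining `N − m` particles. -/
def extendConf {m N : ℕ} (V : Conf m) (W : Conf (N - m)) : Conf N :=
  fun i => if h : (i : ℕ) < m then V ⟨i, h⟩ else W ⟨(i : ℕ) - m, by have := i.isLt; omega⟩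

/-- The `m`-particle marginal of a density on `(ℝ³)^N`. -/
def marginal {N : ℕ} (m : ℕ) (g : Conf N → ℝ) : Conf m → ℝ :=
  fun V => ∫ W : Conf (N - m), g (extendConf V W)

/-!
The Fisher information `I_v(f) = ∫ (∂_v f)² / f = 4 ‖∂_v √f‖²` of a differentiable density `f` in a
direction `v` is the least constant `C` with `‖√f(· + hv) - √f‖² ≤ (h² / 4) C` for all `h > 0`: one
direction is the fundamental theorem of calculus and Cauchy–Schwarz along lines, the other is
Fatou's lemma for the difference quotients. By the reverse triangle inequality in `L²`, the
left-hand side can only decrease when variables are integrated out, hence so does `I_v`. The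
marginal may fail to be differentiable; where it does, its `fderiv` is `0` and the Fatou bound
still holds. Exchangeability makes all particles carry the same information, so comparing particle
by particle gives the inequality.
-/

open Filter Topology Set
open scoped ENNReal

section SquareRoots

variable {X : Type*} [MeasurableSpace X] {μ : Measure X} {a b : X → ℝ}

lemma sq_integral_mul_le (ha : MemLp a 2 μ) (hb : MemLp b 2 μ) :
    (∫ x, a x * b x ∂μ) ^ 2 ≤ (∫ x, a x ^ 2 ∂μ) * ∫ x, b x ^ 2 ∂μ := by
  have holder := integral_mul_norm_le_Lp_mul_Lq (μ := μ) Real.HolderConjugate.two_two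
    (by simpa using ha) (by simpa using hb)
  calc (∫ x, a x * b x ∂μ) ^ 2 = ‖∫ x, a x * b x ∂μ‖ ^ 2 := (sq_abs _).symm
    _ ≤ (√(∫ x, a x ^ 2 ∂μ) * √(∫ x, b x ^ 2 ∂μ)) ^ 2 := by
        gcongr
        exact (norm_integral_le_integral_norm _).trans
          (by simpa [Real.sqrt_eq_rpow] using holder)
    _ = (∫ x, a x ^ 2 ∂μ) * ∫ x, b x ^ 2 ∂μ := by
        rw [mul_pow, Real.sq_sqrt (integral_nonneg fun x => sq_nonneg _),
          Real.sq_sqrt (integral_nonneg fun x => sq_nonneg _)]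

lemma memLp_two_sqrt (ha : Integrable a μ) (ha0 : ∀ x, 0 ≤ a x) :
    MemLp (fun x => √(a x)) 2 μ :=
  (memLp_two_iff_integrable_sq
    (continuous_sqrt.comp_aestronglyMeasurable ha.aestronglyMeasurable)).2
    (by simpa only [Real.sq_sqrt (ha0 _)] using ha)

lemma sq_sqrt_integral_sub_sqrt_integral_le (ha : Integrable a μ) (hb : Integrable b μ)
    (ha0 : ∀ x, 0 ≤ a x) (hb0 : ∀ x, 0 ≤ b x) :
    (√(∫ x, a x ∂μ) - √(∫ x, b x ∂μ)) ^ 2 ≤ ∫ x, (√(a x) - √(b x)) ^ 2 ∂μ := by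
  have hsa := memLp_two_sqrt ha ha0
  have hsb := memLp_two_sqrt hb hb0
  have hprod : Integrable (fun x => √(a x) * √(b x)) μ := hsa.integrable_mul hsb
  have hadd : Integrable (fun x => a x + b x) μ := ha.add hb
  have hexpand : ∫ x, (√(a x) - √(b x)) ^ 2 ∂μ
      = ∫ x, a x ∂μ + ∫ x, b x ∂μ - 2 * ∫ x, √(a x) * √(b x) ∂μ := by
    rw [← integral_const_mul, ← integral_add ha hb, ← integral_sub hadd (hprod.const_mul 2)]
    congr 1 with x
    rw [sub_sq, Real.sq_sqrt (ha0 x), Real.sq_sqrt (hb0 x)]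
    ring
  have cauchySchwarz : ∫ x, √(a x) * √(b x) ∂μ ≤ √(∫ x, a x ∂μ) * √(∫ x, b x ∂μ) := by
    rw [← Real.sqrt_mul (integral_nonneg ha0)]
    refine Real.le_sqrt_of_sq_le ?_
    simpa only [Real.sq_sqrt (ha0 _), Real.sq_sqrt (hb0 _)] using sq_integral_mul_le hsa hsb
  rw [hexpand, sub_sq, Real.sq_sqrt (integral_nonneg ha0), Real.sq_sqrt (integral_nonneg hb0)]
  linarith

lemma ofReal_sq_sqrt_integral_sub_le_lintegral (ha : Integrable a μ) (hb : Integrable b μ)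
    (ha0 : ∀ x, 0 ≤ a x) (hb0 : ∀ x, 0 ≤ b x) :
    ENNReal.ofReal ((√(∫ x, a x ∂μ) - √(∫ x, b x ∂μ)) ^ 2)
      ≤ ∫⁻ x, ENNReal.ofReal ((√(a x) - √(b x)) ^ 2) ∂μ := by
  have hint : Integrable (fun x => (√(a x) - √(b x)) ^ 2) μ :=
    ((memLp_two_sqrt ha ha0).sub (memLp_two_sqrt hb hb0)).integrable_sq
  rw [← ofReal_integral_eq_lintegral_ofReal hint (.of_forall fun x => sq_nonneg _)]
  exact ENNReal.ofReal_le_ofReal (sq_sqrt_integral_sub_sqrt_integral_le ha hb ha0 hb0)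

lemma ofReal_sq_sub_le_lintegral_sq_deriv {u : ℝ → ℝ} {s t : ℝ} (hst : s < t)
    (hu : ∀ r ∈ Icc s t, DifferentiableAt ℝ u r) :
    ENNReal.ofReal ((u t - u s) ^ 2)
      ≤ ENNReal.ofReal (t - s) * ∫⁻ r in Ioc s t, ENNReal.ofReal (deriv u r ^ 2) := by
  by_cases htop : ∫⁻ r in Ioc s t, ENNReal.ofReal (deriv u r ^ 2) = ⊤
  · rw [htop, ENNReal.mul_top (by simpa using hst)]
    exact le_top
  have hsq : Integrable (fun r => deriv u r ^ 2) (volume.restrict (Ioc s t)) :=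
    (lintegral_ofReal_ne_top_iff_integrable
      ((measurable_deriv u).pow_const 2).aestronglyMeasurable
      (.of_forall fun r => sq_nonneg _)).1 htop
  have hL2 : MemLp (deriv u) 2 (volume.restrict (Ioc s t)) :=
    (memLp_two_iff_integrable_sq (measurable_deriv u).aestronglyMeasurable).2 hsq
  have ftc : ∫ r in Ioc s t, deriv u r = u t - u s := by
    rw [← intervalIntegral.integral_of_le hst.le]
    exact intervalIntegral.integral_deriv_eq_sub (by rwa [uIcc_of_le hst.le])
      ((intervalIntegrable_iff_integrableOn_Ioc_of_le hst.le).2 (hL2.integrable one_le_two))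
  rw [← ofReal_integral_eq_lintegral_ofReal hsq (.of_forall fun r => sq_nonneg _),
    ← ENNReal.ofReal_mul (sub_nonneg.2 hst.le), ← ftc]
  refine ENNReal.ofReal_le_ofReal ?_
  simpa [Real.volume_real_Ioc_of_le hst.le] using
    sq_integral_mul_le (memLp_const (1 : ℝ)) hL2

/-- At a zero of `φ` the quotient `φ' ^ 2 / φ` is the junk value `0`; this is harmless because a
zero is a minimum, so `φ'` vanishes there too. -/
lemma sq_deriv_sqrt_add_le {φ : ℝ → ℝ} (hφ : Differentiable ℝ φ) (hφ0 : ∀ s, 0 ≤ φ s)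
    {ε : ℝ} (hε : 0 < ε) (s : ℝ) :
    deriv (fun r => √(φ r + ε)) s ^ 2 ≤ 1 / 4 * (deriv φ s ^ 2 / φ s) := by
  have hpos : 0 < φ s + ε := add_pos_of_nonneg_of_pos (hφ0 s) hε
  rw [(((hφ s).hasDerivAt.add_const ε).sqrt hpos.ne').deriv, div_pow, mul_pow,
    Real.sq_sqrt hpos.le]
  rcases (hφ0 s).eq_or_lt with hzero | hφs
  · have hmin : IsLocalMin φ s := .of_forall fun r => hzero ▸ hφ0 r
    simp [hmin.deriv_eq_zero]
  · calc deriv φ s ^ 2 / (2 ^ 2 * (φ s + ε)) ≤ deriv φ s ^ 2 / (2 ^ 2 * φ s) := by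
          gcongr
          linarith
      _ = 1 / 4 * (deriv φ s ^ 2 / φ s) := by ring

lemma ofReal_sq_sqrt_sub_sqrt_le_lintegral {φ : ℝ → ℝ} (hφ : Differentiable ℝ φ)
    (hφ0 : ∀ s, 0 ≤ φ s) {s t : ℝ} (hst : s < t) :
    ENNReal.ofReal ((√(φ t) - √(φ s)) ^ 2)
      ≤ ENNReal.ofReal ((t - s) / 4) * ∫⁻ r in Ioc s t, ENNReal.ofReal (deriv φ r ^ 2 / φ r) := by
  have hregularised : ∀ ε > 0, ENNReal.ofReal ((√(φ t + ε) - √(φ s + ε)) ^ 2)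
      ≤ ENNReal.ofReal ((t - s) / 4) *
        ∫⁻ r in Ioc s t, ENNReal.ofReal (deriv φ r ^ 2 / φ r) := fun ε hε => by
    have hdiff : ∀ r, DifferentiableAt ℝ (fun r => √(φ r + ε)) r := fun r =>
      ((hφ r).add_const ε).sqrt (add_pos_of_nonneg_of_pos (hφ0 r) hε).ne'
    calc _ ≤ ENNReal.ofReal (t - s) *
          ∫⁻ r in Ioc s t, ENNReal.ofReal (deriv (fun r => √(φ r + ε)) r ^ 2) :=
          ofReal_sq_sub_le_lintegral_sq_deriv hst fun r _ => hdiff r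
      _ ≤ ENNReal.ofReal (t - s) *
          ∫⁻ r in Ioc s t, ENNReal.ofReal (1 / 4 * (deriv φ r ^ 2 / φ r)) := by
          gcongr with r
          exact sq_deriv_sqrt_add_le hφ hφ0 hε r
      _ = _ := by
          simp only [ENNReal.ofReal_mul (show (0 : ℝ) ≤ 1 / 4 by norm_num)]
          rw [lintegral_const_mul' _ _ ENNReal.ofReal_ne_top, ← mul_assoc,
            ← ENNReal.ofReal_mul (sub_nonneg.2 hst.le), mul_one_div]
  have hlim : Tendsto (fun ε => ENNReal.ofReal ((√(φ t + ε) - √(φ s + ε)) ^ 2)) (𝓝[>] 0)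
      (𝓝 (ENNReal.ofReal ((√(φ t) - √(φ s)) ^ 2))) := by
    have hcont : Continuous fun ε => ENNReal.ofReal ((√(φ t + ε) - √(φ s + ε)) ^ 2) :=
      ENNReal.continuous_ofReal.comp (by fun_prop)
    simpa using (hcont.tendsto 0).mono_left nhdsWithin_le_nhds
  exact le_of_tendsto hlim (eventually_mem_nhdsWithin.mono hregularised)

end SquareRoots

section DirectionalFisherInfo

variable {E F : Type*} [NormedAddCommGroup E] [NormedSpace ℝ E] [NormedAddCommGroup F]
  [NormedSpace ℝ F]

lemma ofReal_sq_fderiv_div_le_liminf {f : E → ℝ} (hf0 : ∀ x, 0 ≤ f x) (x v : E) :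
    ENNReal.ofReal (fderiv ℝ f x v ^ 2 / f x)
      ≤ liminf (fun h : ℝ => ENNReal.ofReal (4 / h ^ 2 * (√(f (x + h • v)) - √(f x)) ^ 2))
          (𝓝[>] 0) := by
  by_cases hf : DifferentiableAt ℝ f x
  swap
  · simp [fderiv_zero_of_not_differentiableAt hf]
  rcases (hf0 x).eq_or_lt with hzero | hpos
  · simp [← hzero]
  have hline : HasDerivAt (fun h : ℝ => f (x + h • v)) (fderiv ℝ f x v) 0 :=
    hf.hasFDerivAt.hasLineDerivAt v
  have hsqrt : HasDerivAt (fun h : ℝ => √(f (x + h • v))) (fderiv ℝ f x v / (2 * √(f x))) 0 := by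
    simpa using hline.sqrt (by simpa using hpos.ne')
  have hquotient := (hsqrt.tendsto_slope_zero_right.pow 2).const_mul 4
  refine (Tendsto.liminf_eq ((ENNReal.continuous_ofReal.tendsto _).comp ?_)).ge
  convert hquotient using 2
  · simp [mul_pow, div_eq_mul_inv, mul_assoc]
  · rw [div_pow, mul_pow, Real.sq_sqrt hpos.le]
    ring

variable [MeasurableSpace E] [MeasurableSpace F]

/-- The Fisher information `∫ (∂_v f)² / f` of a density `f` in the direction `v`, as an extended
nonnegative number so that no integrability is presupposed. The integrand is `0` at the zeros
of `f`, as well as where `f` is not differentiable. -/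
def directionalFisherInfo (μ : Measure E) (f : E → ℝ) (v : E) : ℝ≥0∞ :=
  ∫⁻ x, ENNReal.ofReal (fderiv ℝ f x v ^ 2 / f x) ∂μ

lemma measurable_ofReal_sq_fderiv_div [OpensMeasurableSpace E] {f : E → ℝ} (hf : Measurable f)
    (v : E) : Measurable fun x => ENNReal.ofReal (fderiv ℝ f x v ^ 2 / f x) :=
  (((measurable_fderiv_apply_const ℝ f v).pow_const 2).div hf).ennreal_ofReal

lemma lintegral_sq_sqrt_translate_sub_le [BorelSpace E] [SecondCountableTopology E]
    (μ : Measure E) [SFinite μ] [μ.IsAddLeftInvariant] {f : E → ℝ} (hf : Differentiable ℝ f)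
    (hf0 : ∀ x, 0 ≤ f x) (v : E) {h : ℝ} (hh : 0 < h) :
    ∫⁻ x, ENNReal.ofReal ((√(f (x + h • v)) - √(f x)) ^ 2) ∂μ
      ≤ ENNReal.ofReal (h ^ 2 / 4) * directionalFisherInfo μ f v := by
  set I : E → ℝ≥0∞ := fun x => ENNReal.ofReal (fderiv ℝ f x v ^ 2 / f x)
  have hI : Measurable I := measurable_ofReal_sq_fderiv_div hf.continuous.measurable v
  have halong_line : ∀ x, ENNReal.ofReal ((√(f (x + h • v)) - √(f x)) ^ 2)
      ≤ ENNReal.ofReal (h / 4) * ∫⁻ s in Ioc 0 h, I (x + s • v) := fun x => by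
    have hderiv : ∀ s : ℝ,
        HasDerivAt (fun s : ℝ => f (x + s • v)) (fderiv ℝ f (x + s • v) v) s := fun s =>
      (hf _).hasFDerivAt.comp_hasDerivAt s
        (by simpa using ((hasDerivAt_id s).smul_const v).const_add x)
    simpa only [(hderiv _).deriv, zero_smul, add_zero, sub_zero] using
      ofReal_sq_sqrt_sub_sqrt_le_lintegral (φ := fun s => f (x + s • v))
        (fun s => (hderiv s).differentiableAt) (fun s => hf0 _) hh
  calc _ ≤ ∫⁻ x, (ENNReal.ofReal (h / 4) * ∫⁻ s in Ioc 0 h, I (x + s • v)) ∂μ :=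
        lintegral_mono halong_line
    _ = ENNReal.ofReal (h / 4) * ∫⁻ s in Ioc 0 h, ∫⁻ x, I (x + s • v) ∂μ := by
        rw [lintegral_const_mul' _ _ ENNReal.ofReal_ne_top, lintegral_lintegral_swap]
        exact (hI.comp (by fun_prop : Measurable fun p : E × ℝ => p.1 + p.2 • v)).aemeasurable
    _ = ENNReal.ofReal (h / 4) * (directionalFisherInfo μ f v * ENNReal.ofReal h) := by
        simp only [lintegral_add_right_eq_self I, setLIntegral_const, Real.volume_Ioc, sub_zero]
        rfl
    _ = _ := by
        rw [mul_comm (directionalFisherInfo μ f v), ← mul_assoc,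
          ← ENNReal.ofReal_mul (by positivity), div_mul_eq_mul_div, ← sq]

lemma directionalFisherInfo_le_of_translate [BorelSpace E] {μ : Measure E}
    {f : E → ℝ} (hf : Measurable f) (hf0 : ∀ x, 0 ≤ f x) {v : E} {C : ℝ≥0∞}
    (hC : ∀ h > 0, ∫⁻ x, ENNReal.ofReal ((√(f (x + h • v)) - √(f x)) ^ 2) ∂μ
      ≤ ENNReal.ofReal (h ^ 2 / 4) * C) :
    directionalFisherInfo μ f v ≤ C := by
  refine (lintegral_mono fun x => ofReal_sq_fderiv_div_le_liminf hf0 x v).trans ?_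
  refine (lintegral_liminf_le fun h => ?_).trans ?_
  · have hshift : Measurable fun x => f (x + h • v) :=
      hf.comp (continuous_add_const (h • v)).measurable
    exact (((hshift.sqrt.sub hf.sqrt).pow_const 2).const_mul _).ennreal_ofReal
  refine liminf_le_of_frequently_le' (eventually_mem_nhdsWithin.mono fun h hh => ?_).frequently
  have hh : 0 < h := hh
  calc ∫⁻ x, ENNReal.ofReal (4 / h ^ 2 * (√(f (x + h • v)) - √(f x)) ^ 2) ∂μ
      = ENNReal.ofReal (4 / h ^ 2) * ∫⁻ x, ENNReal.ofReal ((√(f (x + h • v)) - √(f x)) ^ 2) ∂μ := by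
        simp only [ENNReal.ofReal_mul (show 0 ≤ 4 / h ^ 2 by positivity)]
        exact lintegral_const_mul' _ _ ENNReal.ofReal_ne_top
    _ ≤ ENNReal.ofReal (4 / h ^ 2) * (ENNReal.ofReal (h ^ 2 / 4) * C) := by
        gcongr
        exact hC h hh
    _ = C := by
        rw [← mul_assoc, ← ENNReal.ofReal_mul (by positivity),
          div_mul_div_cancel₀ (by positivity), div_self four_ne_zero, ENNReal.ofReal_one, one_mul]

lemma directionalFisherInfo_integral_le [BorelSpace E] [SecondCountableTopology E]
    {Y : Type*} [MeasurableSpace Y] {μ : Measure E} [SFinite μ] [μ.IsAddLeftInvariant]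
    {ν : Measure Y} [SFinite ν] {g : E → Y → ℝ} (hg : Measurable (Function.uncurry g))
    (hg0 : ∀ x y, 0 ≤ g x y) (hdiff : ∀ y, Differentiable ℝ fun x => g x y)
    (hint : ∀ᵐ x ∂μ, Integrable (g x) ν) (v : E) :
    directionalFisherInfo μ (fun x => ∫ y, g x y ∂ν) v
      ≤ ∫⁻ y, directionalFisherInfo μ (fun x => g x y) v ∂ν := by
  refine directionalFisherInfo_le_of_translate
    hg.stronglyMeasurable.integral_prod_right.measurable
    (fun x => integral_nonneg fun y => hg0 x y) fun h hh => ?_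
  have hint_translate : ∀ᵐ x ∂μ, Integrable (g (x + h • v)) ν :=
    (measurePreserving_add_right μ (h • v)).quasiMeasurePreserving.ae hint
  have hshift : Measurable fun p : E × Y => g (p.1 + h • v) p.2 :=
    hg.comp (by fun_prop : Measurable fun p : E × Y => (p.1 + h • v, p.2))
  calc ∫⁻ x, ENNReal.ofReal ((√(∫ y, g (x + h • v) y ∂ν) - √(∫ y, g x y ∂ν)) ^ 2) ∂μ
      ≤ ∫⁻ x, ∫⁻ y, ENNReal.ofReal ((√(g (x + h • v) y) - √(g x y)) ^ 2) ∂ν ∂μ := by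
        refine lintegral_mono_ae ?_
        filter_upwards [hint, hint_translate] with x hx hx'
        exact ofReal_sq_sqrt_integral_sub_le_lintegral hx' hx (hg0 _) (hg0 _)
    _ = ∫⁻ y, ∫⁻ x, ENNReal.ofReal ((√(g (x + h • v) y) - √(g x y)) ^ 2) ∂μ ∂ν :=
        lintegral_lintegral_swap
          ((hshift.sqrt.sub hg.sqrt).pow_const 2).ennreal_ofReal.aemeasurable
    _ ≤ ∫⁻ y, ENNReal.ofReal (h ^ 2 / 4) * directionalFisherInfo μ (fun x => g x y) v ∂ν :=
        lintegral_mono fun y =>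
          lintegral_sq_sqrt_translate_sub_le μ (hdiff y) (fun x => hg0 x y) v hh
    _ = _ := lintegral_const_mul' _ _ ENNReal.ofReal_ne_top

lemma lintegral_directionalFisherInfo_slice [OpensMeasurableSpace (E × F)] {μ : Measure E}
    [SFinite μ] {ν : Measure F} [SFinite ν] {g : E × F → ℝ} (hg : Differentiable ℝ g) (v : E) :
    ∫⁻ y, directionalFisherInfo μ (fun x => g (x, y)) v ∂ν
      = directionalFisherInfo (μ.prod ν) g (v, 0) := by
  have hslice : ∀ x y, fderiv ℝ (fun x => g (x, y)) x v = fderiv ℝ g (x, y) (v, 0) := fun x y => by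
    have hchain : HasFDerivAt (fun x => g (x, y))
        (fderiv ℝ g (x, y) ∘L ContinuousLinearMap.inl ℝ E F) x :=
      (hg (x, y)).hasFDerivAt.comp x (hasFDerivAt_prodMk_left x y)
    simp [hchain.fderiv]
  simp only [directionalFisherInfo, hslice]
  exact (lintegral_prod_symm' _
    (measurable_ofReal_sq_fderiv_div hg.continuous.measurable (v, 0))).symm

lemma directionalFisherInfo_integral_prod_le [BorelSpace E] [SecondCountableTopology E]
    [BorelSpace F] [SecondCountableTopology F] {μ : Measure E} [SFinite μ]
    [μ.IsAddLeftInvariant] {ν : Measure F} [SFinite ν] {g : E × F → ℝ}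
    (hg : Differentiable ℝ g) (hg0 : ∀ z, 0 ≤ g z) (hint : Integrable g (μ.prod ν)) (v : E) :
    directionalFisherInfo μ (fun x => ∫ y, g (x, y) ∂ν) v
      ≤ directionalFisherInfo (μ.prod ν) g (v, 0) :=
  (directionalFisherInfo_integral_le (g := Function.curry g) hg.continuous.measurable
    (fun x y => hg0 (x, y)) (fun _ => hg.comp (differentiable_id.prodMk (differentiable_const _)))
    hint.prod_right_ae v).trans_eq (lintegral_directionalFisherInfo_slice hg v)

lemma directionalFisherInfo_comp_continuousLinearEquiv [BorelSpace E] [BorelSpace F]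
    {μ : Measure E} {ν : Measure F} (L : E ≃L[ℝ] F) (hL : MeasurePreserving L μ ν)
    (f : F → ℝ) (v : E) :
    directionalFisherInfo μ (f ∘ L) v = directionalFisherInfo ν f (L v) := by
  simp only [directionalFisherInfo, L.comp_right_fderiv]
  exact hL.lintegral_comp_emb L.toHomeomorph.measurableEmbedding
    fun y => ENNReal.ofReal (fderiv ℝ f y (L v) ^ 2 / f y)

end DirectionalFisherInfo

section ParticleSystems

lemma inv_card_mul_sum_const {ι : Type*} [Fintype ι] [Nonempty ι] (a : ℝ≥0∞) :
    (Fintype.card ι : ℝ≥0∞)⁻¹ * ∑ _ : ι, a = a := by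
  rw [Finset.sum_const, nsmul_eq_mul, Finset.card_univ]
  exact ENNReal.inv_mul_cancel_left (by simp) (by simp)

variable {ι κ τ β E : Type*} [NormedAddCommGroup E]

lemma single_comp_symm [DecidableEq ι] [DecidableEq τ] (e : ι ≃ τ) (i : ι) (v : E) :
    (Pi.single i v : ι → E) ∘ e.symm = Pi.single (e i) v := by
  funext t
  simp [Pi.single_apply, Equiv.symm_apply_eq]

variable [NormedSpace ℝ E]

/-- The linear equivalence gluing a configuration of the particles `ι` and one of the particles
`κ` into a configuration of all the particles `τ ≃ ι ⊕ κ`. -/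
def glueConf (e : ι ⊕ κ ≃ τ) : ((ι → E) × (κ → E)) ≃L[ℝ] (τ → E) :=
  (ContinuousLinearEquiv.sumPiEquivProdPi ℝ ι κ fun _ => E).symm.trans
    (ContinuousLinearEquiv.piCongrLeft ℝ (fun _ => E) e)

lemma piCongrLeft_apply_eq_comp_symm (e : ι ≃ τ) (x : ι → E) :
    ContinuousLinearEquiv.piCongrLeft ℝ (fun _ => E) e x = x ∘ e.symm := by
  funext t
  obtain ⟨i, rfl⟩ := e.surjective t
  exact (Equiv.piCongrLeft_apply_apply (fun _ => E) e x i).trans (by simp)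

lemma glueConf_apply (e : ι ⊕ κ ≃ τ) (x : ι → E) (y : κ → E) :
    glueConf e (x, y) = Sum.elim x y ∘ e.symm :=
  (piCongrLeft_apply_eq_comp_symm e _).trans rfl

lemma glueConf_single [DecidableEq ι] [DecidableEq τ] (e : ι ⊕ κ ≃ τ) (i : ι) (v : E) :
    glueConf e (Pi.single i v, 0) = Pi.single (e (Sum.inl i)) v := by
  classical rw [glueConf_apply, Sum.elim_single_zero, single_comp_symm]

variable [MeasurableSpace E]

lemma measurable_glueConf (e : ι ⊕ κ ≃ τ) : Measurable (glueConf (E := E) e) :=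
  (MeasurableEquiv.piCongrLeft (fun _ => E) e).measurable.comp
    (MeasurableEquiv.sumPiEquivProdPi fun _ => E).symm.measurable

variable [Fintype κ]

/-- The marginal, for the particles `ι`, of a density of the particles `τ ≃ ι ⊕ κ`. -/
def particleMarginal (μ : Measure E) (e : ι ⊕ κ ≃ τ) (g : (τ → E) → ℝ) : (ι → E) → ℝ :=
  fun x => ∫ y : κ → E, g (glueConf e (x, y)) ∂Measure.pi fun _ => μ

lemma measurable_particleMarginal {μ : Measure E} [SigmaFinite μ] (e : ι ⊕ κ ≃ τ)
    {g : (τ → E) → ℝ} (hg : Measurable g) : Measurable (particleMarginal μ e g) :=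
  (hg.comp (measurable_glueConf e)).stronglyMeasurable.integral_prod_right'.measurable

variable [Fintype ι] [Fintype τ]

lemma measurePreserving_glueConf (μ : Measure E) [SigmaFinite μ] (e : ι ⊕ κ ≃ τ) :
    MeasurePreserving (glueConf (E := E) e)
      ((Measure.pi fun _ => μ).prod (Measure.pi fun _ => μ)) (Measure.pi fun _ => μ) :=
  (measurePreserving_piCongrLeft (fun _ => μ) e).comp
    (measurePreserving_sumPiEquivProdPi_symm fun _ => μ)

/-- The renormalised Fisher information `|ι|⁻¹ ∫ |∇f|² / f` of a density of the particles `ι`, where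
`|∇f|²` is the sum of the squared derivatives in the directions `b` of each particle; for an
orthonormal basis `b` this is the Euclidean squared norm of the gradient. -/
def renormFisherInfo [DecidableEq ι] [Fintype β] (μ : Measure E) (b : β → E) (f : (ι → E) → ℝ) :
    ℝ≥0∞ :=
  (Fintype.card ι : ℝ≥0∞)⁻¹ *
    ∑ i, ∑ k, directionalFisherInfo (Measure.pi fun _ => μ) f (Pi.single i (b k))

variable [BorelSpace E] [SecondCountableTopology E] {μ : Measure E} [DecidableEq ι] [Fintype β]

lemma renormFisherInfo_eq_lintegral (b : β → E) {f : (ι → E) → ℝ} (hf : Measurable f)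
    (hf0 : ∀ x, 0 ≤ f x) :
    renormFisherInfo μ b f = (Fintype.card ι : ℝ≥0∞)⁻¹ *
      ∫⁻ x, ENNReal.ofReal ((∑ i, ∑ k, fderiv ℝ f x (Pi.single i (b k)) ^ 2) / f x)
        ∂Measure.pi fun _ => μ := by
  have hmeas (v : ι → E) := measurable_ofReal_sq_fderiv_div hf v
  have hterm0 (x v : ι → E) : 0 ≤ fderiv ℝ f x v ^ 2 / f x := div_nonneg (sq_nonneg _) (hf0 x)
  simp only [Finset.sum_div, ENNReal.ofReal_sum_of_nonneg fun _ _ => hterm0 _ _,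
    ENNReal.ofReal_sum_of_nonneg fun _ _ => Finset.sum_nonneg fun _ _ => hterm0 _ _]
  rw [lintegral_finsetSum _ fun i _ => Finset.measurable_fun_sum _ fun _ _ => hmeas _]
  simp only [lintegral_finsetSum _ fun _ _ => hmeas _]
  rfl

lemma toReal_renormFisherInfo (b : β → E) {f : (ι → E) → ℝ} (hf : Measurable f)
    (hf0 : ∀ x, 0 ≤ f x) :
    (renormFisherInfo μ b f).toReal = (1 / (Fintype.card ι : ℝ)) *
      ∫ x, (∑ i, ∑ k, fderiv ℝ f x (Pi.single i (b k)) ^ 2) / f x ∂Measure.pi fun _ => μ := by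
  have hsum : Measurable fun x => ∑ i, ∑ k, fderiv ℝ f x (Pi.single i (b k)) ^ 2 :=
    Finset.measurable_fun_sum _ fun _ _ => Finset.measurable_fun_sum _ fun _ _ =>
      (measurable_fderiv_apply_const ℝ f _).pow_const 2
  have hdensity0 (x : ι → E) : 0 ≤ (∑ i, ∑ k, fderiv ℝ f x (Pi.single i (b k)) ^ 2) / f x :=
    div_nonneg (by positivity) (hf0 x)
  rw [renormFisherInfo_eq_lintegral b hf hf0, ENNReal.toReal_mul, ENNReal.toReal_inv,
    ENNReal.toReal_natCast, one_div,
    integral_eq_lintegral_of_nonneg_ae (.of_forall hdensity0)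
      (hsum.div hf).aestronglyMeasurable]

lemma renormFisherInfo_ne_top [Nonempty ι] (b : β → E) {f : (ι → E) → ℝ} (hf : Measurable f)
    (hf0 : ∀ x, 0 ≤ f x)
    (hint : Integrable (fun x => (∑ i, ∑ k, fderiv ℝ f x (Pi.single i (b k)) ^ 2) / f x)
      (Measure.pi fun _ => μ)) :
    renormFisherInfo μ b f ≠ ⊤ := by
  rw [renormFisherInfo_eq_lintegral b hf hf0]
  exact ENNReal.mul_ne_top (by simp) ((lintegral_ofReal_ne_top_iff_integrable hint.1
    (.of_forall fun x => div_nonneg (by positivity) (hf0 x))).2 hint)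

variable [SigmaFinite μ] [DecidableEq τ]

lemma directionalFisherInfo_particleMarginal_le [μ.IsAddLeftInvariant] (e : ι ⊕ κ ≃ τ)
    {g : (τ → E) → ℝ} (hg : Differentiable ℝ g) (hg0 : ∀ x, 0 ≤ g x)
    (hint : Integrable g (Measure.pi fun _ => μ)) (i : ι) (v : E) :
    directionalFisherInfo (Measure.pi fun _ => μ) (particleMarginal μ e g) (Pi.single i v)
      ≤ directionalFisherInfo (Measure.pi fun _ => μ) g (Pi.single (e (Sum.inl i)) v) := by
  have hglue := measurePreserving_glueConf μ e
  calc _ ≤ directionalFisherInfo ((Measure.pi fun _ => μ).prod (Measure.pi fun _ => μ))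
        (g ∘ glueConf e) (Pi.single i v, 0) :=
        directionalFisherInfo_integral_prod_le (hg.comp (glueConf e).differentiable)
          (fun z => hg0 _) (hglue.integrable_comp_of_integrable hint) _
    _ = _ := by
        rw [directionalFisherInfo_comp_continuousLinearEquiv _ hglue, glueConf_single]

lemma directionalFisherInfo_single_eq_of_exchangeable {g : (ι → E) → ℝ}
    (hsymm : ∀ σ : Equiv.Perm ι, ∀ x : ι → E, g (x ∘ σ) = g x) (i j : ι) (v : E) :
    directionalFisherInfo (Measure.pi fun _ => μ) g (Pi.single i v)
      = directionalFisherInfo (Measure.pi fun _ => μ) g (Pi.single j v) := by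
  let L := ContinuousLinearEquiv.piCongrLeft ℝ (fun _ : ι => E) (Equiv.swap i j)
  have hL : ∀ x, L x = x ∘ (Equiv.swap i j).symm := piCongrLeft_apply_eq_comp_symm _
  calc _ = directionalFisherInfo (Measure.pi fun _ => μ) (g ∘ L) (Pi.single i v) := by
        congr 1 with x
        rw [Function.comp_apply, hL, hsymm]
    _ = directionalFisherInfo (Measure.pi fun _ => μ) g (L (Pi.single i v)) :=
        directionalFisherInfo_comp_continuousLinearEquiv L
          (measurePreserving_piCongrLeft (fun _ => μ) (Equiv.swap i j)) g _
    _ = _ := by rw [hL, single_comp_symm, Equiv.swap_apply_left]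

lemma renormFisherInfo_eq_of_exchangeable (b : β → E) {g : (ι → E) → ℝ}
    (hsymm : ∀ σ : Equiv.Perm ι, ∀ x : ι → E, g (x ∘ σ) = g x) (i : ι) :
    renormFisherInfo μ b g
      = ∑ k, directionalFisherInfo (Measure.pi fun _ => μ) g (Pi.single i (b k)) := by
  have : Nonempty ι := ⟨i⟩
  simp only [renormFisherInfo,
    fun j k => directionalFisherInfo_single_eq_of_exchangeable (μ := μ) hsymm j i (b k)]
  exact inv_card_mul_sum_const _

theorem fisher_subadditivity_general [Nonempty ι] [μ.IsAddLeftInvariant] (b : β → E)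
    (e : ι ⊕ κ ≃ τ) {g : (τ → E) → ℝ} (hg : Differentiable ℝ g) (hg0 : ∀ x, 0 ≤ g x)
    (hint : Integrable g (Measure.pi fun _ => μ))
    (hsymm : ∀ σ : Equiv.Perm τ, ∀ x : τ → E, g (x ∘ σ) = g x) :
    renormFisherInfo μ b (particleMarginal μ e g) ≤ renormFisherInfo μ b g :=
  calc renormFisherInfo μ b (particleMarginal μ e g)
      ≤ (Fintype.card ι : ℝ≥0∞)⁻¹ * ∑ i, ∑ k,
          directionalFisherInfo (Measure.pi fun _ => μ) g (Pi.single (e (Sum.inl i)) (b k)) := by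
        unfold renormFisherInfo
        gcongr with i _ k
        exact directionalFisherInfo_particleMarginal_le e hg hg0 hint i (b k)
    _ = (Fintype.card ι : ℝ≥0∞)⁻¹ * ∑ _ : ι, renormFisherInfo μ b g := by
        simp only [← renormFisherInfo_eq_of_exchangeable b hsymm]
    _ = renormFisherInfo μ b g := inv_card_mul_sum_const _

end ParticleSystems

section Conf

variable {m N : ℕ}

/-- The splitting of `N` particles into the first `m` and the remaining `N - m`. -/
def finSplit (hmN : m ≤ N) : Fin m ⊕ Fin (N - m) ≃ Fin N :=
  finSumFinEquiv.trans (finCongr (Nat.add_sub_cancel' hmN))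

lemma glueConf_finSplit (hmN : m ≤ N) (V : Conf m) (W : Conf (N - m)) :
    glueConf (finSplit hmN) (V, W) = extendConf V W := by
  rw [glueConf_apply, Equiv.comp_symm_eq]
  funext i
  rcases i with i | j <;> simp [extendConf, finSplit]

lemma particleMarginal_finSplit (hmN : m ≤ N) (g : Conf N → ℝ) :
    particleMarginal volume (finSplit hmN) g = marginal m g := by
  funext V
  exact integral_congr_ae (.of_forall fun W => congrArg g (glueConf_finSplit hmN V W))

lemma measurable_marginal (hmN : m ≤ N) {g : Conf N → ℝ} (hg : Measurable g) :
    Measurable (marginal m g) :=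
  particleMarginal_finSplit hmN g ▸ measurable_particleMarginal (finSplit hmN) hg

lemma marginal_nonneg {g : Conf N → ℝ} (hg0 : ∀ x, 0 ≤ g x) (V : Conf m) : 0 ≤ marginal m g V :=
  integral_nonneg fun _ => hg0 _

lemma toReal_renormFisherInfo_conf {g : Conf N → ℝ} (hg : Measurable g) (hg0 : ∀ x, 0 ≤ g x) :
    (renormFisherInfo volume (fun α => (Pi.single α 1 : V3)) g).toReal
      = (1 / (N : ℝ)) * ∫ x, (∑ i, ∑ α, pdN g x i α ^ 2) / g x := by
  rw [toReal_renormFisherInfo _ hg hg0, Fintype.card_fin]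
  rfl

end Conf

/-- Sub-additivity of the renormalised Fisher information:
`(1/m)∫ |∇g_{N,m}|²/g_{N,m} ≤ (1/N)∫ |∇g_N|²/g_N` for a symmetric probability
density `g_N` with finite Fisher information. -/
theorem fisher_subadditivity
    {N : ℕ} (hN : 1 ≤ N) (m : ℕ) (hm : 1 ≤ m) (hmN : m ≤ N)
    (g : Conf N → ℝ) (hmeas : Measurable g) (hnonneg : ∀ x, 0 ≤ g x)
    (hmass : (∫ x : Conf N, g x) = 1)
    (hsymm : ∀ σ : Equiv.Perm (Fin N), ∀ x : Conf N, g (x ∘ σ) = g x)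
    (hdiff : Differentiable ℝ g)
    (hfisher : Integrable (fun x : Conf N => (∑ i, ∑ α, (pdN g x i α) ^ 2) / g x)) :
    (1 / (m : ℝ)) * ∫ V : Conf m,
        (∑ i, ∑ α, (pdN (marginal m g) V i α) ^ 2) / marginal m g V
      ≤ (1 / (N : ℝ)) * ∫ x : Conf N, (∑ i, ∑ α, (pdN g x i α) ^ 2) / g x := by
  have : NeZero m := ⟨by omega⟩
  have : NeZero N := ⟨by omega⟩
  have hint : Integrable g := .of_integral_ne_zero (hmass ▸ one_ne_zero)
  rw [← toReal_renormFisherInfo_conf hmeas hnonneg, ← toReal_renormFisherInfo_conf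
    (measurable_marginal hmN hmeas) (marginal_nonneg hnonneg), ← particleMarginal_finSplit hmN]
  exact ENNReal.toReal_mono (renormFisherInfo_ne_top _ hmeas hnonneg hfisher)
    (fisher_subadditivity_general _ (finSplit hmN) hdiff hnonneg hint hsymm)
end
end
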